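/- arXiv:2211.04962 — 6 statements merged into one kernel-verified Lean document; each statement's English description precedes it below -/
import Mathlib

section
/- Let Λ and Γ be finite dimensional algebras over a field K. Then the K-algebra (Λ/rad Λ) ⊗ (Γ/rad Γ) is semisimple if and only if rad(Λ⊗Γ) = rad Λ ⊗ Γ + Λ ⊗ rad Γ as an ideal of Λ⊗Γ. -/
open TensorProduct

lemma aux_mem_jacobson_of_nilp {R : Type*} [Ring R] (I : Ideal R)
    (h : ∀ x ∈ I, IsNilpotent x) : I ≤ (⊥ : Ideal R).jacobson := by
  intro x hx
  rw [Ideal.mem_jacobson_iff]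
  intro y
  obtain ⟨u, hu⟩ := (h _ (I.mul_mem_left y hx)).isUnit_one_add
  refine ⟨(↑u⁻¹ : R), ?_⟩
  have : (↑u⁻¹ : R) * (1 + y * x) = 1 := by rw [← hu]; simp
  rw [mul_add, mul_one] at this
  rw [Ideal.mem_bot, mul_assoc, add_comm, this, sub_self]

lemma aux_pow_bot {K R : Type*} [Field K] [Ring R] [Algebra K R] (J : Ideal R) [J.IsTwoSided]
    (n : ℕ) : (J.restrictScalars K) ^ (n + 1) ≤ (J ^ (n + 1)).restrictScalars K := by
  induction n with
  | zero => simp [Submodule.pow_one]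
  | succ n ih =>
    rw [pow_succ, Submodule.mul_le]
    intro a ha b hb
    rw [Submodule.restrictScalars_mem, Submodule.pow_succ]
    exact Ideal.mul_mem_mul (ih ha) hb

lemma aux_nilp {K R : Type*} [Field K] [Ring R] [Algebra K R] [FiniteDimensional K R] :
    ∃ n : ℕ, ((⊥ : Ideal R).jacobson.restrictScalars K) ^ n = ⊥ := by
  have : IsArtinianRing R := IsArtinianRing.of_finite K R
  obtain ⟨n, hn⟩ := IsSemiprimaryRing.isNilpotent (R := R)
  rw [Ideal.jacobson_bot]
  refine ⟨n + 1, ?_⟩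
  rw [eq_bot_iff]
  refine (aux_pow_bot (K := K) _ n).trans ?_
  rw [Submodule.pow_succ, hn]
  simp

lemma aux_range_pow {K R S : Type*} [Field K] [Ring R] [Algebra K R] [Ring S] [Algebra K S]
    (U : Submodule K R) (V : Submodule K S) (n : ℕ) :
    (LinearMap.range (TensorProduct.map U.subtype V.subtype)) ^ n ≤
    LinearMap.range (TensorProduct.map (U ^ n).subtype (V ^ n).subtype) := by
  induction n with
  | zero =>
    rw [pow_zero, Submodule.one_le]
    exact ⟨⟨1, by rw [pow_zero]; exact Submodule.one_le.mp le_rfl⟩ ⊗ₜ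
      ⟨1, by rw [pow_zero]; exact Submodule.one_le.mp le_rfl⟩, by simp [Algebra.TensorProduct.one_def]⟩
  | succ n ih =>
    rw [pow_succ, Submodule.mul_le]
    intro a ha b hb
    replace ha := ih ha
    obtain ⟨a, rfl⟩ := ha
    obtain ⟨b, rfl⟩ := hb
    induction a with
    | zero => simp
    | add x y hx hy =>
      rw [map_add, add_mul]
      exact add_mem hx hy
    | tmul x y =>
      induction b with
      | zero => simp
      | add x y hx hy =>
        rw [map_add, mul_add]
        exact add_mem hx hy
      | tmul z w =>
        exact ⟨⟨x * z, by rw [pow_succ]; exact Submodule.mul_mem_mul x.2 z.2⟩ ⊗ₜ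
          ⟨y * w, by rw [pow_succ]; exact Submodule.mul_mem_mul y.2 w.2⟩, by simp⟩

lemma aux_range_nilp {K R S : Type*} [Field K] [Ring R] [Algebra K R] [Ring S] [Algebra K S]
    (U : Submodule K R) (V : Submodule K S) (n : ℕ) (h : U ^ n = ⊥ ∨ V ^ n = ⊥)
    (x : R ⊗[K] S) (hx : x ∈ LinearMap.range (TensorProduct.map U.subtype V.subtype)) :
    IsNilpotent x := by
  refine ⟨n, ?_⟩
  obtain ⟨y, hy⟩ := aux_range_pow U V n (Submodule.pow_mem_pow _ hx n)
  rw [← hy]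
  have : TensorProduct.map (U ^ n).subtype (V ^ n).subtype = 0 := by
    ext a b
    rcases h with h | h
    · have : (a : R) = 0 := (Submodule.mem_bot K).mp (h.le a.2)
      simp [this]
    · have : (b : S) = 0 := (Submodule.mem_bot K).mp (h.le b.2)
      simp [this]
  rw [this]; rfl

lemma aux_range_top {K R S : Type*} [Field K] [Ring R] [Algebra K R] [Ring S] [Algebra K S]
    (U : Submodule K R) :
    LinearMap.range (TensorProduct.map U.subtype (LinearMap.id : S →ₗ[K] S)) ≤
    LinearMap.range (TensorProduct.map U.subtype (⊤ : Submodule K S).subtype) := by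
  rintro _ ⟨y, rfl⟩
  induction y with
  | zero => simp
  | add x y hx hy => rw [map_add]; exact add_mem hx hy
  | tmul x y => exact ⟨x ⊗ₜ ⟨y, trivial⟩, by simp⟩

lemma aux_top_range {K R S : Type*} [Field K] [Ring R] [Algebra K R] [Ring S] [Algebra K S]
    (V : Submodule K S) :
    LinearMap.range (TensorProduct.map (LinearMap.id : R →ₗ[K] R) V.subtype) ≤
    LinearMap.range (TensorProduct.map (⊤ : Submodule K R).subtype V.subtype) := by
  rintro _ ⟨y, rfl⟩
  induction y with
  | zero => simp
  | add x y hx hy => rw [map_add]; exact add_mem hx hy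
  | tmul x y => exact ⟨⟨x, trivial⟩ ⊗ₜ y, by simp⟩

/-- For finite dimensional algebras `Λ`, `Γ` over a field `K`, the algebra
`(Λ/rad Λ) ⊗ (Γ/rad Γ)` is semisimple if and only if
`rad (Λ ⊗ Γ) = rad Λ ⊗ Γ + Λ ⊗ rad Γ` (an equality of ideals of `Λ ⊗ Γ`, here expressed as an
equality of the underlying `K`-subspaces).  The quotients `Λ/rad Λ` and `Γ/rad Γ` are
represented by arbitrary surjective algebra homomorphisms `p : Λ → A`, `q : Γ → B` whose
kernels are the Jacobson radicals. -/
theorem semisimple_quotient_tensor_iff_radical_tensor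
    (K Λ Γ A B : Type*) [Field K] [Ring Λ] [Ring Γ]
    [Algebra K Λ] [Algebra K Γ] [FiniteDimensional K Λ] [FiniteDimensional K Γ]
    [Ring A] [Algebra K A] [Ring B] [Algebra K B]
    (p : Λ →ₐ[K] A) (q : Γ →ₐ[K] B)
    (hp : Function.Surjective p) (hq : Function.Surjective q)
    (hkerp : RingHom.ker p = (⊥ : Ideal Λ).jacobson)
    (hkerq : RingHom.ker q = (⊥ : Ideal Γ).jacobson) :
    IsSemisimpleRing (A ⊗[K] B) ↔
      Submodule.restrictScalars K ((⊥ : Ideal (Λ ⊗[K] Γ)).jacobson) =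
        LinearMap.range (TensorProduct.map
            (((⊥ : Ideal Λ).jacobson.restrictScalars K).subtype) (LinearMap.id : Γ →ₗ[K] Γ)) ⊔
          LinearMap.range (TensorProduct.map
            (LinearMap.id : Λ →ₗ[K] Λ) (((⊥ : Ideal Γ).jacobson.restrictScalars K).subtype)) := by
  have exp : Function.Exact (((⊥ : Ideal Λ).jacobson.restrictScalars K).subtype) p.toLinearMap := by
    intro x
    rw [← hkerp]
    simp
  have exq : Function.Exact (((⊥ : Ideal Γ).jacobson.restrictScalars K).subtype) q.toLinearMap := by
    intro x
    rw [← hkerq]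
    simp
  have hidΛ : Function.Exact (0 : Λ →ₗ[K] Λ) (AlgHom.id K Λ).toLinearMap := by
    intro x; simp [eq_comm]
  have hidΓ : Function.Exact (0 : Γ →ₗ[K] Γ) (AlgHom.id K Γ).toLinearMap := by
    intro x; simp [eq_comm]
  have k0 := TensorProduct.map_ker exp hp exq hq
  have k1 := TensorProduct.map_ker exp hp hidΓ Function.surjective_id
  have k2 := TensorProduct.map_ker hidΛ Function.surjective_id exq hq
  simp only [LinearMap.lTensor, LinearMap.rTensor, TensorProduct.map_zero_left,
    TensorProduct.map_zero_right, LinearMap.range_zero, sup_bot_eq, bot_sup_eq] at k0 k1 k2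
  rw [sup_comm] at k0
  have : IsArtinianRing (Λ ⊗[K] Γ) := IsArtinianRing.of_finite K _
  have le1 : LinearMap.range (TensorProduct.map
            (((⊥ : Ideal Λ).jacobson.restrictScalars K).subtype) (LinearMap.id : Γ →ₗ[K] Γ)) ≤
      Submodule.restrictScalars K ((⊥ : Ideal (Λ ⊗[K] Γ)).jacobson) := by
    obtain ⟨n, hn⟩ := aux_nilp (K := K) (R := Λ)
    intro x hx
    refine aux_mem_jacobson_of_nilp
      (RingHom.ker (Algebra.TensorProduct.map p (AlgHom.id K Γ))) ?_ ?_
    · intro y hy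
      refine aux_range_nilp _ _ n (Or.inl hn) y (aux_range_top _ ?_)
      rw [← k1]; exact hy
    · rw [← k1] at hx; exact hx
  have le2 : LinearMap.range (TensorProduct.map
            (LinearMap.id : Λ →ₗ[K] Λ) (((⊥ : Ideal Γ).jacobson.restrictScalars K).subtype)) ≤
      Submodule.restrictScalars K ((⊥ : Ideal (Λ ⊗[K] Γ)).jacobson) := by
    obtain ⟨n, hn⟩ := aux_nilp (K := K) (R := Γ)
    intro x hx
    refine aux_mem_jacobson_of_nilp
      (RingHom.ker (Algebra.TensorProduct.map (AlgHom.id K Λ) q)) ?_ ?_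
    · intro y hy
      refine aux_range_nilp _ _ n (Or.inr hn) y (aux_top_range _ ?_)
      rw [← k2]; exact hy
    · rw [← k2] at hx; exact hx
  let f : Λ ⊗[K] Γ →+* A ⊗[K] B := (Algebra.TensorProduct.map p q).toRingHom
  have hf : Function.Surjective f := TensorProduct.map_surjective hp hq
  have hs : RingHomSurjective f := ⟨hf⟩
  constructor
  · intro hss
    refine le_antisymm ?_ (sup_le le1 le2)
    rw [← k0]
    intro x hx
    rw [Submodule.restrictScalars_mem, Ideal.jacobson_bot] at hx
    have := Ring.le_comap_jacobson f hx
    rw [IsSemisimpleRing.jacobson_eq_bot] at this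
    exact this
  · intro h
    rw [← k0, Ideal.jacobson_bot] at h
    have hle : ∀ a ∈ Ring.jacobson (Λ ⊗[K] Γ), f a = 0 := by
      intro a ha
      have : a ∈ Submodule.restrictScalars K (Ring.jacobson (Λ ⊗[K] Γ)) := ha
      rw [h] at this
      exact this
    exact RingHom.isSemisimpleRing_of_surjective (Ideal.Quotient.lift _ f hle)
      (Ideal.Quotient.lift_surjective_of_surjective _ hle hf)
end

section
/- Let Λ and Γ be algebras over an algebraically closed field K. Then Λ and Γ are both basic finite dimensional K-algebras if and only if the tensor product algebra Λ⊗Γ is a basic finite dimensional K-algebra. -/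
open TensorProduct

/-- A finite dimensional algebra `A` over a field `K` is *basic* if `A/rad A` is isomorphic,
as a `K`-algebra, to a finite direct product `K × ⋯ × K` of copies of `K`; equivalently,
there is a surjective `K`-algebra homomorphism `A → (Fin n → K)` whose kernel is the
Jacobson radical of `A`. -/
def IsBasicAlgebra (K A : Type*) [Field K] [Ring A] [Algebra K A] : Prop :=
  ∃ (n : ℕ) (φ : A →ₐ[K] (Fin n → K)),
    Function.Surjective φ ∧ RingHom.ker φ = (⊥ : Ideal A).jacobson

lemma mem_jac_aux {R : Type*} [Ring R] (x : R) (h : ∀ y, IsNilpotent (y * x)) :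
    x ∈ (⊥ : Ideal R).jacobson := by
  rw [Ideal.mem_jacobson_iff]
  intro y
  obtain ⟨z, hz⟩ := (h y).isUnit_one_add.exists_left_inv
  refine ⟨z, ?_⟩
  rw [mul_add, mul_one] at hz
  rw [Ideal.mem_bot, mul_assoc, ← hz]
  abel

lemma jac_image_aux {K A B R : Type*} [Field K] [Ring A] [Ring B] [Ring R]
    [Algebra K A] [Algebra K B] [Algebra K R] (f : A →ₐ[K] R) (g : B →ₐ[K] R)
    (hc : ∀ a b, f a * g b = g b * f a)
    (hs : ∀ y : R, y ∈ Submodule.span K {r | ∃ a b, r = f a * g b})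
    (J : Ideal A) (hJ : IsNilpotent J) (j : A) (hj : j ∈ J) :
    f j ∈ (⊥ : Ideal R).jacobson := by
  obtain ⟨k, hk⟩ := hJ
  apply mem_jac_aux
  intro y
  set P : Submodule K R := (J.restrictScalars K).map f.toLinearMap with hP
  set Q : Submodule K R := (⊤ : Submodule K B).map g.toLinearMap with hQ
  have hPQ : Commute P Q := by
    apply le_antisymm
    · rw [Submodule.mul_le]
      rintro _ ⟨a, ha, rfl⟩ _ ⟨b, hb, rfl⟩
      simp only [AlgHom.toLinearMap_apply]
      rw [hc]
      exact Submodule.mul_mem_mul ⟨b, hb, rfl⟩ ⟨a, ha, rfl⟩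
    · rw [Submodule.mul_le]
      rintro _ ⟨b, hb, rfl⟩ _ ⟨a, ha, rfl⟩
      simp only [AlgHom.toLinearMap_apply]
      rw [← hc]
      exact Submodule.mul_mem_mul ⟨a, ha, rfl⟩ ⟨b, hb, rfl⟩
  have hJk : ∀ m, P ^ m ≤ ((J ^ m).restrictScalars K).map f.toLinearMap := by
    intro m
    induction m with
    | zero =>
      rw [pow_zero, Submodule.one_le]
      exact ⟨1, (by
        have e : J ^ 0 = ⊤ := (Submodule.pow_zero J).trans Ideal.one_eq_top
        rw [e]; trivial), by simp⟩
    | succ m ih =>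
      rw [pow_succ, Submodule.mul_le]
      rintro u hu _ ⟨b, hb, rfl⟩
      obtain ⟨a, ha, rfl⟩ := ih hu
      refine ⟨a * b, ?_, by simp⟩
      change a * b ∈ J ^ (m + 1)
      have e : J ^ (m + 1) = J ^ m * J := Submodule.pow_succ J
      rw [e]
      exact Ideal.mul_mem_mul ha hb
  have hmem : y * f j ∈ P * Q := by
    induction hs y using Submodule.span_induction with
    | mem x hx =>
      obtain ⟨a, b, rfl⟩ := hx
      rw [mul_assoc, ← hc, ← mul_assoc, ← map_mul]
      exact Submodule.mul_mem_mul ⟨a * j, J.mul_mem_left a hj, rfl⟩ ⟨b, trivial, rfl⟩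
    | zero => simp
    | add x y _ _ hx hy => rw [add_mul]; exact add_mem hx hy
    | smul c x _ hx => rw [smul_mul_assoc]; exact Submodule.smul_mem _ _ hx
  refine ⟨k, ?_⟩
  have h1 : (y * f j) ^ k ∈ (P * Q) ^ k := Submodule.pow_mem_pow _ hmem k
  rw [hPQ.mul_pow] at h1
  have h2 : P ^ k = ⊥ := by
    have := hJk k
    rw [hk] at this
    rw [eq_bot_iff]
    refine this.trans ?_
    rintro _ ⟨a, ha, rfl⟩
    have : a = 0 := by simpa using ha
    simp [this]
  rw [h2] at h1
  simpa using h1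

/-- The characters detect nilpotency. -/
def CharNil (K A : Type*) [Field K] [Ring A] [Algebra K A] : Prop :=
  ∀ a : A, (∀ χ : A →ₐ[K] K, χ a = 0) → IsNilpotent a

lemma nilp_of_jac {K A : Type*} [Field K] [Ring A] [Algebra K A] [FiniteDimensional K A] :
    IsNilpotent ((⊥ : Ideal A).jacobson) := by
  have : IsArtinianRing A := IsArtinianRing.of_finite K A
  exact IsArtinianRing.isNilpotent_jacobson_bot

lemma nilp_elem_of_jac {K A : Type*} [Field K] [Ring A] [Algebra K A] [FiniteDimensional K A]
    (a : A) (ha : a ∈ (⊥ : Ideal A).jacobson) : IsNilpotent a := by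
  obtain ⟨k, hk⟩ := nilp_of_jac (K := K) (A := A)
  refine ⟨k, ?_⟩
  have := Ideal.pow_mem_pow ha k
  rw [hk] at this
  simpa using this

lemma charNil_of_basic {K A : Type*} [Field K] [Ring A] [Algebra K A] [FiniteDimensional K A]
    (h : IsBasicAlgebra K A) : CharNil K A := by
  obtain ⟨n, φ, -, hk⟩ := h
  intro a ha
  apply nilp_elem_of_jac (K := K)
  rw [← hk, RingHom.mem_ker]
  ext i
  exact ha ((Pi.evalAlgHom K (fun _ : Fin n => K) i).comp φ)

lemma basic_of_charNil {K A : Type*} [Field K] [Ring A] [Algebra K A] [FiniteDimensional K A]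
    (h : CharNil K A) : IsBasicAlgebra K A := by
  have hli : LinearIndependent K (fun χ : A →ₐ[K] K => χ.toLinearMap) := 
    linearIndependent_algHom_toLinearMap K A K
  have : Finite (A →ₐ[K] K) := hli.finite
  let e := Finite.equivFin (A →ₐ[K] K)
  let φ : A →ₐ[K] (Fin (Nat.card (A →ₐ[K] K)) → K) :=
    AlgHom.pi fun i => e.symm i
  have hφ : ∀ a i, φ a i = e.symm i a := fun a i => rfl
  refine ⟨_, φ, ?_, ?_⟩
  · rw [← AlgHom.coe_toLinearMap, ← LinearMap.range_eq_top]
    by_contra hne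
    obtain ⟨f, hf0, hf⟩ := Submodule.exists_le_ker_of_lt_top _ (lt_top_iff_ne_top.2 hne)
    apply hf0
    have hli2 := hli.comp e.symm e.symm.injective
    rw [Fintype.linearIndependent_iff] at hli2
    have hz := hli2 (fun i => f (Pi.single i 1)) (by
      ext a
      have h1 : f (φ a) = 0 := hf ⟨a, rfl⟩
      rw [LinearMap.pi_apply_eq_sum_univ] at h1
      simp only [LinearMap.coe_sum, Finset.sum_apply, LinearMap.smul_apply, LinearMap.zero_apply]
      rw [← h1]
      refine Finset.sum_congr rfl fun i _ => ?_
      simp only [hφ, smul_eq_mul, Function.comp, AlgHom.toLinearMap_apply]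
      rw [mul_comm]
      congr 2
      ext j
      simp [Pi.single_apply, eq_comm])
    ext i
    simpa using hz i
  · apply le_antisymm
    · intro a ha
      apply mem_jac_aux
      intro y
      apply h
      intro χ
      have := congrFun ((RingHom.mem_ker).1 ha) (e χ)
      rw [hφ] at this
      simp at this
      simp [this]
    · intro a ha
      have hn := nilp_elem_of_jac (K := K) a ha
      rw [RingHom.mem_ker]
      exact (hn.map φ).eq_zero

lemma charNil_tensor {K A B : Type*} [Field K] [Ring A] [Ring B] [Algebra K A] [Algebra K B]
    [FiniteDimensional K A] [FiniteDimensional K B]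
    (hA : IsBasicAlgebra K A) (hB : IsBasicAlgebra K B) : CharNil K (A ⊗[K] B) := by
  obtain ⟨n, φ, hφ, hφk⟩ := hA
  obtain ⟨m, ψ, hψ, hψk⟩ := hB
  intro x hx
  apply nilp_elem_of_jac (K := K)
  have hspan : ∀ y : A ⊗[K] B, y ∈ Submodule.span K {r | ∃ (a : A) (b : B), r = a ⊗ₜ[K] b} := by
    intro y
    induction y with
    | zero => exact zero_mem _
    | tmul a b => exact Submodule.subset_span ⟨a, b, rfl⟩
    | add x y hx hy => exact add_mem hx hy
  have hL : ∀ j ∈ (⊥ : Ideal A).jacobson,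
      j ⊗ₜ[K] (1 : B) ∈ (⊥ : Ideal (A ⊗[K] B)).jacobson := by
    intro j hj
    refine jac_image_aux (K := K) (B := B) (Algebra.TensorProduct.includeLeft (S := K))
      Algebra.TensorProduct.includeRight ?_ ?_ _ (nilp_of_jac (K := K)) j hj
    · intro a b; simp
    · intro y; simpa using hspan y
  have hR : ∀ j ∈ (⊥ : Ideal B).jacobson,
      (1 : A) ⊗ₜ[K] j ∈ (⊥ : Ideal (A ⊗[K] B)).jacobson := by
    intro j hj
    refine jac_image_aux (K := K) (A := B) (B := A) (R := A ⊗[K] B)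
      Algebra.TensorProduct.includeRight
      (Algebra.TensorProduct.includeLeft (S := K)) ?_ ?_ _ (nilp_of_jac (K := K)) j hj
    · intro a b; simp
    · intro y
      refine Submodule.span_mono ?_ (hspan y)
      rintro _ ⟨a, b, rfl⟩
      exact ⟨b, a, by simp⟩
  have h0 : TensorProduct.map φ.toLinearMap ψ.toLinearMap x = 0 := by
    apply ((Pi.basisFun K (Fin n)).tensorProduct (Pi.basisFun K (Fin m))).repr.injective
    ext ⟨i, j⟩
    have h1 := hx (Algebra.TensorProduct.lift
      ((Pi.evalAlgHom K (fun _ : Fin n => K) i).comp φ)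
      ((Pi.evalAlgHom K (fun _ : Fin m => K) j).comp ψ) (fun _ _ => Commute.all _ _))
    rw [map_zero, Finsupp.zero_apply, ← h1]
    clear h1 hx
    induction x with
    | zero => simp
    | tmul a b => simp [Module.Basis.tensorProduct_repr_tmul_apply, mul_comm]
    | add x y hx hy => simp only [map_add, Finsupp.add_apply, hx, hy]
  obtain ⟨s, hs⟩ := φ.toLinearMap.exists_rightInverse_of_surjective (LinearMap.range_eq_top.2 hφ)
  obtain ⟨t, ht⟩ := ψ.toLinearMap.exists_rightInverse_of_surjective (LinearMap.range_eq_top.2 hψ)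
  have key : ∀ y : A ⊗[K] B, y - TensorProduct.map s t
      (TensorProduct.map φ.toLinearMap ψ.toLinearMap y) ∈ (⊥ : Ideal (A ⊗[K] B)).jacobson := by
    intro y
    induction y with
    | zero => simp
    | add x y hx hy =>
      have := add_mem hx hy
      rw [map_add, map_add]
      convert this using 1
      abel
    | tmul a b =>
      have e1 : a - s (φ a) ∈ (⊥ : Ideal A).jacobson := by
        rw [← hφk, RingHom.mem_ker, map_sub, sub_eq_zero]
        exact (LinearMap.congr_fun hs (φ a)).symm
      have e2 : b - t (ψ b) ∈ (⊥ : Ideal B).jacobson := by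
        rw [← hψk, RingHom.mem_ker, map_sub, sub_eq_zero]
        exact (LinearMap.congr_fun ht (ψ b)).symm
      have := add_mem (Ideal.mul_mem_left _ ((1 : A) ⊗ₜ[K] b) (hL _ e1))
        (Ideal.mul_mem_left _ (s (φ a) ⊗ₜ[K] (1 : B)) (hR _ e2))
      convert this using 1
      rw [Algebra.TensorProduct.tmul_mul_tmul, Algebra.TensorProduct.tmul_mul_tmul]
      simp only [one_mul, mul_one, TensorProduct.map_tmul,
        AlgHom.toLinearMap_apply, TensorProduct.sub_tmul, TensorProduct.tmul_sub]
      abel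
  have := key x
  rwa [h0, map_zero, sub_zero] at this

lemma charNil_of_injective {K A R : Type*} [Field K] [Ring A] [Ring R] [Algebra K A]
    [Algebra K R] (f : A →ₐ[K] R) (hf : Function.Injective f) (h : CharNil K R) :
    CharNil K A := by
  intro a ha
  rw [← IsNilpotent.map_iff hf]
  exact h _ fun χ => ha (χ.comp f)

/-- For (nonzero) algebras `Λ`, `Γ` over an algebraically closed field `K`:
`Λ` and `Γ` are both basic finite dimensional algebras if and only if `Λ ⊗[K] Γ` is a basic
finite dimensional algebra. -/
theorem isBasicAlgebra_tensorProduct_iff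
    (K Λ Γ : Type*) [Field K] [IsAlgClosed K] [Ring Λ] [Ring Γ]
    [Nontrivial Λ] [Nontrivial Γ] [Algebra K Λ] [Algebra K Γ] :
    (IsBasicAlgebra K Λ ∧ FiniteDimensional K Λ ∧
        IsBasicAlgebra K Γ ∧ FiniteDimensional K Γ) ↔
      (IsBasicAlgebra K (Λ ⊗[K] Γ) ∧ FiniteDimensional K (Λ ⊗[K] Γ)) := by
  constructor
  · rintro ⟨h1, h2, h3, h4⟩
    exact ⟨basic_of_charNil (charNil_tensor h1 h3), inferInstance⟩
  · rintro ⟨h1, h2⟩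
    have hl : Function.Injective (Algebra.TensorProduct.includeLeft : Λ →ₐ[K] Λ ⊗[K] Γ) :=
      Algebra.TensorProduct.includeLeft_injective (algebraMap K Γ).injective
    have hr : Function.Injective (Algebra.TensorProduct.includeRight : Γ →ₐ[K] Λ ⊗[K] Γ) :=
      Algebra.TensorProduct.includeRight_injective (algebraMap K Λ).injective
    have hc := charNil_of_basic h1
    have f1 : FiniteDimensional K Λ := FiniteDimensional.of_injective
      (Algebra.TensorProduct.includeLeft : Λ →ₐ[K] Λ ⊗[K] Γ).toLinearMap hl
    have f2 : FiniteDimensional K Γ := FiniteDimensional.of_injective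
      (Algebra.TensorProduct.includeRight : Γ →ₐ[K] Λ ⊗[K] Γ).toLinearMap hr
    exact ⟨basic_of_charNil (charNil_of_injective _ hl hc), f1,
      basic_of_charNil (charNil_of_injective _ hr hc), f2⟩
end

section
/- Let Λ and Γ be finite dimensional algebras over an algebraically closed field K, let M be a nonzero finitely generated left Λ-module and N a nonzero finitely generated left Γ-module. Then M and N are both indecomposable modules if and only if M⊗N is an indecomposable (Λ⊗Γ)-module. -/
open TensorProduct

section Pre
variable {K Λ Γ M N : Type*} [Field K] [Ring Λ] [Ring Γ] [Algebra K Λ] [Algebra K Γ]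
  [AddCommGroup M] [Module K M] [Module Λ M] [IsScalarTower K Λ M]
  [AddCommGroup N] [Module K N] [Module Γ N] [IsScalarTower K Γ N]

/-- The action of `Γ` on `M ⊗[K] N` through the right factor. -/
noncomputable def rsmul (g : Γ) (x : M ⊗[K] N) : M ⊗[K] N :=
  (TensorProduct.comm K M N).symm (g • TensorProduct.comm K M N x)

lemma rsmul_tmul (g : Γ) (m : M) (n : N) :
    rsmul g (m ⊗ₜ[K] n) = m ⊗ₜ[K] (g • n) := by
  simp [rsmul, TensorProduct.smul_tmul']

lemma rsmul_add (g : Γ) (x y : M ⊗[K] N) :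
    rsmul g (x + y) = rsmul g x + rsmul g y := by
  simp [rsmul, smul_add]

/-- The right-factor `Γ`-module structure on `M ⊗[K] N`.  Not an instance, to avoid
diamonds; it is only used to construct `tensorTensorModule` below. -/
noncomputable def tensorRightModule : Module Γ (M ⊗[K] N) where
  smul := rsmul
  one_smul x := by show rsmul 1 x = x; simp [rsmul]
  mul_smul g h x := by
    show rsmul (g * h) x = rsmul g (rsmul h x); simp [rsmul, mul_smul]
  smul_zero g := by show rsmul g 0 = 0; simp [rsmul]
  smul_add g x y := by show rsmul g (x + y) = rsmul g x + rsmul g y; exact rsmul_add g x y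
  add_smul g h x := by
    show rsmul (g + h) x = rsmul g x + rsmul h x; simp [rsmul, add_smul]
  zero_smul x := by show rsmul 0 x = 0; simp [rsmul]

instance tensorLeftTower : IsScalarTower K Λ (M ⊗[K] N) := by
  constructor
  intro c a x
  induction x using TensorProduct.induction_on with
  | zero => simp
  | tmul m n =>
      rw [TensorProduct.smul_tmul', TensorProduct.smul_tmul', smul_assoc]
      exact (TensorProduct.smul_tmul' c (a • m) n).symm
  | add x y hx hy => rw [smul_add, smul_add, hx, hy]; exact (smul_add c _ _).symm

lemma pre_smulCommClass :
    letI : Module Γ (M ⊗[K] N) := tensorRightModule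
    SMulCommClass Λ Γ (M ⊗[K] N) := by
  letI : Module Γ (M ⊗[K] N) := tensorRightModule
  constructor
  intro a g x
  show a • rsmul g x = rsmul g (a • x)
  induction x using TensorProduct.induction_on with
  | zero => simp [rsmul]
  | tmul m n => rw [rsmul_tmul, TensorProduct.smul_tmul', TensorProduct.smul_tmul', rsmul_tmul]
  | add x y hx hy => rw [rsmul_add, smul_add, hx, hy, smul_add, rsmul_add]

lemma pre_rightTower :
    letI : Module Γ (M ⊗[K] N) := tensorRightModule
    IsScalarTower K Γ (M ⊗[K] N) := by
  letI : Module Γ (M ⊗[K] N) := tensorRightModule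
  constructor
  intro c g x
  show rsmul (c • g) x = c • rsmul g x
  unfold rsmul
  rw [smul_assoc]
  exact map_smul (TensorProduct.comm K M N).symm c _

/-- The `(Λ ⊗[K] Γ)`-module structure on `M ⊗[K] N`, characterized by
`(a ⊗ₜ b) • (m ⊗ₜ n) = (a • m) ⊗ₜ (b • n)`. -/
noncomputable instance tensorTensorModule :
    Module (Λ ⊗[K] Γ) (M ⊗[K] N) :=
  letI : Module Γ (M ⊗[K] N) := tensorRightModule
  haveI := (pre_smulCommClass (K := K) (Λ := Λ) (Γ := Γ) (M := M) (N := N))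
  haveI := (pre_rightTower (K := K) (Γ := Γ) (M := M) (N := N))
  TensorProduct.Algebra.module

lemma tensorTensor_smul_tmul (a : Λ) (g : Γ) (m : M) (n : N) :
    (a ⊗ₜ[K] g) • (m ⊗ₜ[K] n) = (a • m) ⊗ₜ[K] (g • n) := by
  letI : Module Γ (M ⊗[K] N) := tensorRightModule
  haveI := (pre_smulCommClass (K := K) (Λ := Λ) (Γ := Γ) (M := M) (N := N))
  haveI := (pre_rightTower (K := K) (Γ := Γ) (M := M) (N := N))
  show TensorProduct.Algebra.moduleAux (a ⊗ₜ[K] g) (m ⊗ₜ[K] n) = _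
  rw [TensorProduct.Algebra.moduleAux_apply]
  show a • rsmul g (m ⊗ₜ[K] n) = _
  rw [rsmul_tmul, TensorProduct.smul_tmul']

instance tensorTensorTower : IsScalarTower K (Λ ⊗[K] Γ) (M ⊗[K] N) := by
  constructor
  intro c x v
  letI : Module Γ (M ⊗[K] N) := tensorRightModule
  haveI := (pre_smulCommClass (K := K) (Λ := Λ) (Γ := Γ) (M := M) (N := N))
  haveI := (pre_rightTower (K := K) (Γ := Γ) (M := M) (N := N))
  show TensorProduct.Algebra.moduleAux (c • x) v = c • TensorProduct.Algebra.moduleAux x v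
  rw [map_smul, LinearMap.smul_apply]

end Pre

/-- A module is *indecomposable* if it is nonzero and is not the internal direct sum of two
nonzero submodules. -/
def IsIndecomposableModule (R M : Type*) [Ring R] [AddCommGroup M] [Module R M] : Prop :=
  Nontrivial M ∧ ∀ p q : Submodule R M, IsCompl p q → p = ⊥ ∨ q = ⊥


/-- Indecomposability in terms of idempotent endomorphisms. -/
lemma isIndecomposableModule_iff_idem (R M : Type*) [Ring R] [AddCommGroup M] [Module R M] :
    IsIndecomposableModule R M ↔
      Nontrivial M ∧ ∀ e : Module.End R M, e * e = e → e = 0 ∨ e = 1 := by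
  constructor
  · rintro ⟨h1, h2⟩
    refine ⟨h1, fun e he => ?_⟩
    rcases h2 _ _ (LinearMap.IsIdempotentElem.isCompl (f := e) he) with h | h
    · left; exact LinearMap.range_eq_bot.1 h
    · right
      ext m
      have : e (e m - m) = 0 := by
        rw [map_sub, ← Module.End.mul_apply, he, sub_self]
      have := LinearMap.ker_eq_bot'.1 h _ this
      simpa using sub_eq_zero.1 this
  · rintro ⟨h1, h2⟩
    refine ⟨h1, fun p q hpq => ?_⟩
    rcases h2 (p.projection q hpq) (Submodule.isIdempotentElem_projection hpq) with h | h
    · left; rw [← Submodule.range_projection hpq, h, LinearMap.range_zero]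
    · right; rw [← Submodule.ker_projection hpq, h]; exact LinearMap.ker_id

/-- Abstract augmentation of an algebra all of whose elements are scalar plus nilpotent. -/
lemma exists_augmentation {K A : Type*} [Field K] [Ring A] [Algebra K A] [Nontrivial A]
    (H : ∀ a : A, ∃ c : K, IsNilpotent (a - algebraMap K A c)) :
    ∃ φ : A →ₐ[K] K, ∀ a, φ a = 0 → a ∈ Ideal.jacobson (⊥ : Ideal A) := by
  have hU : ∀ a : A, ∀ c : K, c ≠ 0 → IsNilpotent (a - algebraMap K A c) → IsUnit a := by
    intro a c hc hn
    have := hn.isUnit_add_right_of_commute ((isUnit_iff_ne_zero.2 hc).map (algebraMap K A))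
      (Algebra.commutes c _).symm
    simpa using this
  have hd : ∀ a : A, IsNilpotent a ∨ IsUnit a := by
    intro a
    obtain ⟨c, hc⟩ := H a
    by_cases h : c = 0
    · left; simpa [h] using hc
    · right; exact hU a c h hc
  have hl : ∀ b a : A, IsNilpotent a → IsNilpotent (b * a) := by
    intro b a ha
    refine (hd _).resolve_right fun hu => ?_
    obtain ⟨v, hv⟩ := hu.exists_left_inv
    obtain ⟨k, hk⟩ := ha
    induction k with
    | zero => simp at hk
    | succ k ih =>
      apply ih
      calc a ^ k = (v * (b * a)) * a ^ k := by rw [hv, one_mul]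
        _ = v * b * a ^ (k + 1) := by rw [pow_succ']; noncomm_ring
        _ = 0 := by rw [hk, mul_zero]
  have hr : ∀ b a : A, IsNilpotent a → IsNilpotent (a * b) := by
    intro b a ha
    refine (hd _).resolve_right fun hu => ?_
    obtain ⟨v, hv⟩ := hu.exists_right_inv
    obtain ⟨k, hk⟩ := ha
    induction k with
    | zero => simp at hk
    | succ k ih =>
      apply ih
      calc a ^ k = a ^ k * ((a * b) * v) := by rw [hv, mul_one]
        _ = a ^ (k + 1) * (b * v) := by rw [pow_succ]; noncomm_ring
        _ = 0 := by rw [hk, zero_mul]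
  have hnu : ∀ a : A, IsNilpotent a → ¬ IsUnit a := fun a h hu => hu.not_isNilpotent h
  have hadd : ∀ a b : A, IsNilpotent a → IsNilpotent b → IsNilpotent (a + b) := by
    intro a b ha hb
    refine (hd _).resolve_right fun hu => ?_
    obtain ⟨v, hv⟩ := hu.exists_left_inv
    have h1 := (hl v a ha).isUnit_one_sub
    have h2 : 1 - v * a = v * b := by rw [← hv]; noncomm_ring
    rw [h2] at h1
    exact hnu _ (hl v b hb) h1
  choose c hc using H
  have huniq : ∀ a : A, ∀ d : K, IsNilpotent (a - algebraMap K A d) → c a = d := by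
    intro a d h
    by_contra hne
    have h3 := hadd _ _ h (hc a).neg
    have h4 : a - algebraMap K A d + -(a - algebraMap K A (c a)) = algebraMap K A (c a - d) := by
      rw [map_sub]; noncomm_ring
    rw [h4] at h3
    exact hnu _ h3 ((isUnit_iff_ne_zero.2 (sub_ne_zero.2 hne)).map (algebraMap K A))
  have hcomm : ∀ d : K, c (algebraMap K A d) = d := fun d => huniq _ _ (by simp)
  refine ⟨{ toFun := c, map_one' := ?_, map_mul' := ?_, map_zero' := ?_, map_add' := ?_,
            commutes' := hcomm }, ?_⟩
  · simpa using hcomm 1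
  · intro a b
    apply huniq
    have : a * b - algebraMap K A (c a * c b) = (a - algebraMap K A (c a)) * b
        + algebraMap K A (c a) * (b - algebraMap K A (c b)) := by
      rw [map_mul]; noncomm_ring
    rw [this]
    exact hadd _ _ (hr _ _ (hc a)) (hl _ _ (hc b))
  · simpa using hcomm 0
  · intro a b
    apply huniq
    have : a + b - algebraMap K A (c a + c b) = (a - algebraMap K A (c a))
        + (b - algebraMap K A (c b)) := by
      rw [map_add]; noncomm_ring
    rw [this]
    exact hadd _ _ (hc a) (hc b)
  · intro a ha
    have ha : c a = 0 := ha
    have hn : IsNilpotent a := by simpa [ha] using hc a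
    rw [Ideal.mem_jacobson_iff]
    intro y
    obtain ⟨z, hz⟩ := (hl y a hn).isUnit_one_add.exists_left_inv
    refine ⟨z, ?_⟩
    rw [Ideal.mem_bot, ← hz]
    noncomm_ring

/-- Fitting: an endomorphism of an indecomposable module is a scalar plus a nilpotent. -/
lemma exists_scalar_nilpotent {K Λ M : Type*} [Field K] [IsAlgClosed K] [Ring Λ]
    [Algebra K Λ] [FiniteDimensional K Λ]
    [AddCommGroup M] [Module K M] [Module Λ M] [IsScalarTower K Λ M] [Module.Finite Λ M]
    (h : IsIndecomposableModule Λ M) (a : Module.End Λ M) :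
    ∃ c : K, IsNilpotent (a - algebraMap K (Module.End Λ M) c) := by
  have := h.1
  have : Module.Finite K M := Module.Finite.trans Λ M
  have : IsNoetherian K M := inferInstance
  have : IsArtinian K M := inferInstance
  have : IsNoetherian Λ M := isNoetherian_of_tower K inferInstance
  have : IsArtinian Λ M := isArtinian_of_tower K inferInstance
  obtain ⟨c, hc⟩ := Module.End.exists_eigenvalue (K := K) (a.restrictScalars K : Module.End K M)
  refine ⟨c, ?_⟩
  obtain ⟨v, hv⟩ := hc.exists_hasEigenvector
  set b := a - algebraMap K (Module.End Λ M) c with hb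
  have hbv : b v = 0 := by
    have := hv.apply_eq_smul
    simpa [hb, sub_eq_zero] using this
  obtain ⟨n, hn⟩ := (LinearMap.eventually_isCompl_ker_pow_range_pow b).exists_forall_of_atTop
  have hn' := hn (n + 1) (Nat.le_succ n)
  rcases h.2 _ _ hn' with h1 | h1
  · exfalso
    have : v ∈ LinearMap.ker (b ^ (n + 1)) := by
      rw [LinearMap.mem_ker, pow_succ, Module.End.mul_apply, hbv, map_zero]
    rw [h1] at this
    exact hv.2 (by simpa using this)
  · exact ⟨n + 1, LinearMap.range_eq_bot.1 h1⟩

/-- An idempotent matrix with entries in the Jacobson radical is zero. -/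
lemma matrix_idem_eq_zero {A ι : Type*} [Ring A] [Fintype ι] [DecidableEq ι] (F : Matrix ι ι A)
    (hF : F * F = F) (h : ∀ i j, F i j ∈ Ideal.jacobson (⊥ : Ideal A)) : F = 0 := by
  have h1 : F ∈ (Ideal.jacobson ((⊥ : Ideal A).matrix ι)) := Ideal.matrix_jacobson_le _ h
  rw [Ideal.matrix_bot, Ideal.mem_jacobson_iff] at h1
  obtain ⟨z, hz⟩ := h1 (-1)
  rw [Ideal.mem_bot, sub_eq_zero] at hz
  calc F = (z * -1 * F + z) * F := by rw [hz, one_mul]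
    _ = - (z * (F * F)) + z * F := by noncomm_ring
    _ = 0 := by rw [hF]; simp

section Aux
variable {K Λ Γ M N : Type*} [Field K] [Ring Λ] [Ring Γ] [Algebra K Λ] [Algebra K Γ]
  [AddCommGroup M] [Module K M] [Module Λ M] [IsScalarTower K Λ M]
  [AddCommGroup N] [Module K N] [Module Γ N] [IsScalarTower K Γ N]

lemma tensorTensor_tmul_one_smul (a : Λ) (x : M ⊗[K] N) :
    (a ⊗ₜ[K] (1 : Γ)) • x = a • x := by
  induction x using TensorProduct.induction_on with
  | zero => simp
  | tmul m n => rw [tensorTensor_smul_tmul, one_smul, TensorProduct.smul_tmul']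
  | add x y hx hy => rw [smul_add, smul_add, hx, hy]

variable (Λ M) in
/-- Contraction against a functional on the right factor. -/
noncomputable def contr (ψ : N →ₗ[K] K) : M ⊗[K] N →ₗ[Λ] M :=
  (AlgebraTensorModule.rid K Λ M).toLinearMap ∘ₗ
    AlgebraTensorModule.map (LinearMap.id : M →ₗ[Λ] M) ψ

lemma contr_tmul (ψ : N →ₗ[K] K) (m : M) (n : N) :
    contr Λ M ψ (m ⊗ₜ[K] n) = ψ n • m := by
  simp [contr]

variable (Λ M) in
/-- Insertion of a fixed vector in the right factor. -/
noncomputable def inser (n : N) : M →ₗ[Λ] M ⊗[K] N where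
  toFun m := m ⊗ₜ[K] n
  map_add' x y := TensorProduct.add_tmul x y n
  map_smul' a m := by rw [RingHom.id_apply, TensorProduct.smul_tmul']

/-- Underlying `Λ`-linear map. -/
noncomputable def toLeft (f : Module.End (Λ ⊗[K] Γ) (M ⊗[K] N)) :
    M ⊗[K] N →ₗ[Λ] M ⊗[K] N where
  toFun := f
  map_add' := map_add f
  map_smul' a x := by
    rw [RingHom.id_apply, ← tensorTensor_tmul_one_smul (Γ := Γ), map_smul,
      tensorTensor_tmul_one_smul]

/-- Matrix entries of an endomorphism of `M ⊗ N`. -/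
noncomputable def entry (f : Module.End (Λ ⊗[K] Γ) (M ⊗[K] N)) (ψ : N →ₗ[K] K) (n : N) :
    Module.End Λ M :=
  contr Λ M ψ ∘ₗ toLeft f ∘ₗ inser Λ M n

lemma entry_apply (f : Module.End (Λ ⊗[K] Γ) (M ⊗[K] N)) (ψ : N →ₗ[K] K) (n : N) (m : M) :
    entry f ψ n m = contr Λ M ψ (f (m ⊗ₜ[K] n)) := rfl

variable (Λ) in
lemma sum_contr {ι : Type*} [Fintype ι] (b : Module.Basis ι K N) (x : M ⊗[K] N) :
    ∑ i, (contr Λ M (b.coord i) x) ⊗ₜ[K] b i = x := by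
  induction x using TensorProduct.induction_on with
  | zero => simp
  | tmul m n =>
    simp only [contr_tmul, TensorProduct.smul_tmul, ← TensorProduct.tmul_sum]
    congr 1
    exact b.sum_repr n
  | add x y hx hy =>
    simp only [map_add, TensorProduct.add_tmul, Finset.sum_add_distrib, hx, hy]

lemma apply_eq_sum {ι : Type*} [Fintype ι] (b : Module.Basis ι K N)
    (f : Module.End (Λ ⊗[K] Γ) (M ⊗[K] N)) (m : M) (n : N) :
    f (m ⊗ₜ[K] n) = ∑ k, (entry f (b.coord k) n m) ⊗ₜ[K] b k :=
  (sum_contr Λ b _).symm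

lemma entry_mul {ι : Type*} [Fintype ι] (b : Module.Basis ι K N)
    (f g : Module.End (Λ ⊗[K] Γ) (M ⊗[K] N)) (ψ : N →ₗ[K] K) (n : N) :
    entry (f * g) ψ n = ∑ k, entry f ψ (b k) * entry g (b.coord k) n := by
  ext m
  rw [entry_apply, Module.End.mul_apply, apply_eq_sum b g, map_sum, map_sum,
    LinearMap.sum_apply]
  rfl

lemma entry_add_right (f : Module.End (Λ ⊗[K] Γ) (M ⊗[K] N)) (ψ : N →ₗ[K] K) (n n' : N) :
    entry f ψ (n + n') = entry f ψ n + entry f ψ n' := by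
  ext m
  simp [entry_apply, TensorProduct.tmul_add]

lemma apply_tmul_smul {ι : Type*} [Fintype ι] (b : Module.Basis ι K N)
    (f : Module.End (Λ ⊗[K] Γ) (M ⊗[K] N)) (g : Γ) (m : M) (n : N) :
    f (m ⊗ₜ[K] (g • n)) = ∑ k, (entry f (b.coord k) n m) ⊗ₜ[K] (g • b k) := by
  have h : m ⊗ₜ[K] (g • n) = ((1 : Λ) ⊗ₜ[K] g) • (m ⊗ₜ[K] n) := by
    rw [tensorTensor_smul_tmul, one_smul]
  rw [h, map_smul, apply_eq_sum b, Finset.smul_sum]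
  simp only [tensorTensor_smul_tmul, one_smul]

lemma entry_smul_right {ι : Type*} [Fintype ι] (b : Module.Basis ι K N)
    (f : Module.End (Λ ⊗[K] Γ) (M ⊗[K] N)) (ψ : N →ₗ[K] K) (g : Γ) (n : N) :
    entry f ψ (g • n) = ∑ k, ψ (g • b k) • entry f (b.coord k) n := by
  ext m
  rw [entry_apply, apply_tmul_smul b, map_sum, LinearMap.sum_apply]
  simp only [contr_tmul, LinearMap.smul_apply]

/-- The `Γ`-endomorphism of `N` induced by an augmentation of `End M`. -/
noncomputable def induced {ι : Type*} [Fintype ι] (b : Module.Basis ι K N)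
    (φ : Module.End Λ M →ₐ[K] K) (f : Module.End (Λ ⊗[K] Γ) (M ⊗[K] N)) : Module.End Γ N where
  toFun n := ∑ i, φ (entry f (b.coord i) n) • b i
  map_add' x y := by
    simp only [entry_add_right, map_add, add_smul, Finset.sum_add_distrib]
  map_smul' g n := by
    simp only [entry_smul_right b, map_sum, map_smul, RingHom.id_apply, Finset.smul_sum,
      Finset.sum_smul]
    rw [Finset.sum_comm]
    refine Finset.sum_congr rfl fun k _ => ?_
    rw [smul_algebra_smul_comm]
    conv_rhs => rw [← b.sum_repr (g • b k)]
    rw [Finset.smul_sum]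
    refine Finset.sum_congr rfl fun i _ => ?_
    rw [smul_eq_mul, mul_comm, mul_smul]
    rfl

lemma induced_apply {ι : Type*} [Fintype ι] (b : Module.Basis ι K N)
    (φ : Module.End Λ M →ₐ[K] K) (f : Module.End (Λ ⊗[K] Γ) (M ⊗[K] N)) (n : N) :
    induced b φ f n = ∑ i, φ (entry f (b.coord i) n) • b i := rfl

lemma coord_induced {ι : Type*} [Fintype ι] (b : Module.Basis ι K N)
    (φ : Module.End Λ M →ₐ[K] K) (f : Module.End (Λ ⊗[K] Γ) (M ⊗[K] N)) (i : ι) (n : N) :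
    b.coord i (induced b φ f n) = φ (entry f (b.coord i) n) := by
  classical
  rw [induced_apply, map_sum]
  simp [Finsupp.single_apply]

lemma induced_mul {ι : Type*} [Fintype ι] (b : Module.Basis ι K N)
    (φ : Module.End Λ M →ₐ[K] K) (f g : Module.End (Λ ⊗[K] Γ) (M ⊗[K] N)) :
    induced b φ (f * g) = induced b φ f * induced b φ g := by
  ext n
  apply b.ext_elem
  intro i
  change b.coord i _ = b.coord i _
  rw [coord_induced, entry_mul b, map_sum, Module.End.mul_apply, induced_apply b φ g, map_sum,
    map_sum]
  refine Finset.sum_congr rfl fun k _ => ?_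
  rw [map_mul, ← algebraMap_smul Γ (φ (entry g (b.coord k) n)) (b k), map_smul, algebraMap_smul,
    map_smul, coord_induced, smul_eq_mul, mul_comm]

lemma induced_one {ι : Type*} [Fintype ι] (b : Module.Basis ι K N)
    (φ : Module.End Λ M →ₐ[K] K) :
    induced b φ (1 : Module.End (Λ ⊗[K] Γ) (M ⊗[K] N)) = 1 := by
  ext n
  apply b.ext_elem
  intro i
  change b.coord i _ = b.coord i _
  rw [coord_induced]
  have : entry (1 : Module.End (Λ ⊗[K] Γ) (M ⊗[K] N)) (b.coord i) n
      = algebraMap K _ (b.coord i n) := by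
    ext m
    rw [entry_apply, Module.End.one_apply, contr_tmul]
    rfl
  rw [this, AlgHom.commutes]
  rfl

lemma induced_sub {ι : Type*} [Fintype ι] (b : Module.Basis ι K N)
    (φ : Module.End Λ M →ₐ[K] K) (f g : Module.End (Λ ⊗[K] Γ) (M ⊗[K] N)) :
    induced b φ (f - g) = induced b φ f - induced b φ g := by
  ext n
  have : ∀ ψ : N →ₗ[K] K, entry (f - g) ψ n = entry f ψ n - entry g ψ n := by
    intro ψ
    ext m
    simp [entry_apply]
  simp only [induced_apply, LinearMap.sub_apply, this, map_sub, sub_smul, Finset.sum_sub_distrib]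

lemma idem_eq_zero {ι : Type*} [Fintype ι] (b : Module.Basis ι K N)
    (φ : Module.End Λ M →ₐ[K] K)
    (hφ : ∀ a, φ a = 0 → a ∈ Ideal.jacobson (⊥ : Ideal (Module.End Λ M)))
    (f : Module.End (Λ ⊗[K] Γ) (M ⊗[K] N)) (hf : f * f = f) (h0 : induced b φ f = 0) :
    f = 0 := by
  classical
  have hF := matrix_idem_eq_zero (Matrix.of fun i j => entry f (b.coord i) (b j))
    (by
      ext1 i j
      rw [Matrix.mul_apply]
      simp only [Matrix.of_apply]
      rw [← entry_mul b, hf])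
    (by
      intro i j
      apply hφ
      rw [Matrix.of_apply, ← coord_induced, h0]
      simp)
  have hent : ∀ i j, entry f (b.coord i) (b j) = 0 := fun i j => congrFun (congrFun hF i) j
  have hb : ∀ m j, f (m ⊗ₜ[K] b j) = 0 := by
    intro m j
    rw [apply_eq_sum b]
    simp [hent]
  ext x
  rw [LinearMap.zero_apply, ← sum_contr Λ b x, map_sum]
  exact Finset.sum_eq_zero fun i _ => hb _ _

/-- The tensor product of endomorphisms. -/
noncomputable def endTensor (e : Module.End Λ M) (h : Module.End Γ N) :
    Module.End (Λ ⊗[K] Γ) (M ⊗[K] N) where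
  toFun := TensorProduct.map (e.restrictScalars K) (h.restrictScalars K)
  map_add' := map_add _
  map_smul' r x := by
    rw [RingHom.id_apply]
    induction r using TensorProduct.induction_on with
    | zero => simp
    | add r s hr hs => rw [add_smul, map_add, hr, hs, add_smul]
    | tmul a g =>
      induction x using TensorProduct.induction_on with
      | zero => simp
      | add x y hx hy => rw [smul_add, map_add, hx, hy, map_add, smul_add]
      | tmul m n =>
        rw [tensorTensor_smul_tmul, TensorProduct.map_tmul, TensorProduct.map_tmul,
          tensorTensor_smul_tmul]
        simp

lemma endTensor_tmul (e : Module.End Λ M) (h : Module.End Γ N) (m : M) (n : N) :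
    endTensor (K := K) e h (m ⊗ₜ[K] n) = e m ⊗ₜ[K] h n := rfl

lemma end_ext (f g : Module.End (Λ ⊗[K] Γ) (M ⊗[K] N))
    (h : ∀ m n, f (m ⊗ₜ[K] n) = g (m ⊗ₜ[K] n)) : f = g := by
  ext x
  induction x using TensorProduct.induction_on with
  | zero => simp
  | add x y hx hy => rw [map_add, map_add, hx, hy]
  | tmul m n => exact h m n

end Aux

lemma tmul_eq_zero_cases {K M N : Type*} [Field K] [AddCommGroup M] [Module K M]
    [AddCommGroup N] [Module K N] (m : M) (n : N) (h : m ⊗ₜ[K] n = 0) : m = 0 ∨ n = 0 := by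
  by_cases hn : n = 0
  · exact Or.inr hn
  · left
    obtain ⟨ψ, hψ⟩ := Module.Projective.exists_dual_ne_zero K hn
    have h1 := contr_tmul (Λ := K) ψ m n
    rw [h, map_zero] at h1
    exact (smul_eq_zero.1 h1.symm).resolve_left hψ

open TensorProduct in
/-- For finite dimensional algebras `Λ`, `Γ` over an algebraically closed
field `K` and nonzero finitely generated modules `M` over `Λ` and `N` over `Γ`:
`M` and `N` are both indecomposable iff `M ⊗[K] N` is an indecomposable `(Λ⊗Γ)`-module. -/
theorem isIndecomposable_tensorProduct_iff
    (K Λ Γ M N : Type*) [Field K] [IsAlgClosed K] [Ring Λ] [Ring Γ]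
    [Algebra K Λ] [Algebra K Γ] [FiniteDimensional K Λ] [FiniteDimensional K Γ]
    [AddCommGroup M] [Module K M] [Module Λ M] [IsScalarTower K Λ M] [Module.Finite Λ M]
    [Nontrivial M]
    [AddCommGroup N] [Module K N] [Module Γ N] [IsScalarTower K Γ N] [Module.Finite Γ N]
    [Nontrivial N] :
    (IsIndecomposableModule Λ M ∧ IsIndecomposableModule Γ N) ↔
      IsIndecomposableModule (Λ ⊗[K] Γ) (M ⊗[K] N) := by
  rw [isIndecomposableModule_iff_idem (Λ ⊗[K] Γ)]
  constructor
  · rintro ⟨hM, hN⟩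
    have : Module.Finite K N := Module.Finite.trans Γ N
    have hnt : Nontrivial (M ⊗[K] N) := by
      obtain ⟨m, hm⟩ := exists_ne (0 : M)
      obtain ⟨n, hn⟩ := exists_ne (0 : N)
      refine ⟨m ⊗ₜ n, 0, fun h => ?_⟩
      rcases tmul_eq_zero_cases m n h with h | h
      · exact hm h
      · exact hn h
    refine ⟨hnt, fun f hf => ?_⟩
    have : Nontrivial (Module.End Λ M) := inferInstance
    obtain ⟨φ, hφ⟩ := exists_augmentation (K := K) (exists_scalar_nilpotent (K := K) hM)
    let b := Module.finBasis K N
    have hc : induced b φ f * induced b φ f = induced b φ f := by rw [← induced_mul, hf]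
    rcases ((isIndecomposableModule_iff_idem Γ N).1 hN).2 _ hc with h | h
    · left
      exact idem_eq_zero b φ hφ f hf h
    · right
      have := idem_eq_zero b φ hφ (1 - f) (IsIdempotentElem.one_sub hf)
        (by rw [induced_sub, induced_one, h, sub_self])
      exact (sub_eq_zero.1 this).symm
  · rintro ⟨-, h⟩
    obtain ⟨m₀, hm₀⟩ := exists_ne (0 : M)
    obtain ⟨n₀, hn₀⟩ := exists_ne (0 : N)
    rw [isIndecomposableModule_iff_idem, isIndecomposableModule_iff_idem]
    refine ⟨⟨inferInstance, fun e he => ?_⟩, ⟨inferInstance, fun e he => ?_⟩⟩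
    · rcases h (endTensor (K := K) e 1) (end_ext _ _ fun m n => by
        rw [Module.End.mul_apply, endTensor_tmul, endTensor_tmul, ← Module.End.mul_apply, he]
        rfl) with h | h
      · left
        ext m
        have h1 : e m ⊗ₜ[K] n₀ = 0 := LinearMap.congr_fun h (m ⊗ₜ[K] n₀)
        exact (tmul_eq_zero_cases _ _ h1).resolve_right hn₀
      · right
        ext m
        have h1 : e m ⊗ₜ[K] n₀ = m ⊗ₜ[K] n₀ := LinearMap.congr_fun h (m ⊗ₜ[K] n₀)
        rw [← sub_eq_zero, ← TensorProduct.sub_tmul] at h1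
        exact sub_eq_zero.1 ((tmul_eq_zero_cases _ _ h1).resolve_right hn₀)
    · rcases h (endTensor (K := K) 1 e) (end_ext _ _ fun m n => by
        rw [Module.End.mul_apply, endTensor_tmul, endTensor_tmul, ← Module.End.mul_apply e, he]
        rfl) with h | h
      · left
        ext n
        have h1 : m₀ ⊗ₜ[K] e n = 0 := LinearMap.congr_fun h (m₀ ⊗ₜ[K] n)
        exact (tmul_eq_zero_cases _ _ h1).resolve_left hm₀
      · right
        ext n
        have h1 : m₀ ⊗ₜ[K] e n = m₀ ⊗ₜ[K] n := LinearMap.congr_fun h (m₀ ⊗ₜ[K] n)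
        rw [← sub_eq_zero, ← TensorProduct.tmul_sub] at h1
        exact sub_eq_zero.1 ((tmul_eq_zero_cases _ _ h1).resolve_left hm₀)
end

section
/- Let Λ and Γ be finite dimensional algebras over an algebraically closed field K, let M be a finitely generated left Λ-module and N a finitely generated left Γ-module. Then rad(M⊗N) = rad M ⊗ N + M ⊗ rad N as a submodule of the (Λ⊗Γ)-module M⊗N. -/
open TensorProduct

section Helpers
variable {K Λ Γ : Type*} [Field K] [Ring Λ] [Ring Γ] [Algebra K Λ] [Algebra K Γ]

lemma isSemisimpleRing_tensor [IsAlgClosed K] [FiniteDimensional K Γ]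
    [IsSemisimpleRing Λ] [IsSemisimpleRing Γ] : IsSemisimpleRing (Λ ⊗[K] Γ) := by
  obtain ⟨n, d, -, ⟨e⟩⟩ := IsSemisimpleRing.exists_algEquiv_pi_matrix_of_isAlgClosed K Γ
  let e1 : (Λ ⊗[K] Γ) ≃ₐ[K] Λ ⊗[K] (Π i, Matrix (Fin (d i)) (Fin (d i)) K) :=
    Algebra.TensorProduct.congr AlgEquiv.refl e
  let e2 := Algebra.TensorProduct.piRight K K Λ (fun i => Matrix (Fin (d i)) (Fin (d i)) K)
  let e3 := AlgEquiv.piCongrRight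
    (fun i => (matrixEquivTensor (Fin (d i)) K Λ).symm)
  exact ((e1.trans (e2.trans e3)).symm.toRingEquiv).isSemisimpleRing

/-- The span of pure tensors with left entry in `I`. -/
def leftSpan (K Γ : Type*) {Λ : Type*} [Field K] [Ring Λ] [Ring Γ] [Algebra K Λ] [Algebra K Γ]
    (I : Ideal Λ) : Submodule K (Λ ⊗[K] Γ) :=
  Submodule.span K {x | ∃ a ∈ I, ∃ b : Γ, x = a ⊗ₜ[K] b}

lemma leftSpan_mul {I J : Ideal Λ} {u v : Λ ⊗[K] Γ} (hu : u ∈ leftSpan K Γ I)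
    (hv : v ∈ leftSpan K Γ J) : u * v ∈ leftSpan K Γ (I * J) := by
  have := Submodule.mul_mem_mul hu hv
  rw [leftSpan, leftSpan, Submodule.span_mul_span] at this
  refine Submodule.span_mono ?_ this
  rintro _ ⟨_, ⟨a, ha, b, rfl⟩, _, ⟨c, hc, d, rfl⟩, rfl⟩
  exact ⟨a * c, Ideal.mul_mem_mul ha hc, b * d, by simp⟩

lemma leftSpan_top (w : Λ ⊗[K] Γ) : w ∈ leftSpan K Γ (⊤ : Ideal Λ) := by
  induction w using TensorProduct.induction_on with
  | zero => exact zero_mem _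
  | tmul a b => exact Submodule.subset_span ⟨a, trivial, b, rfl⟩
  | add x y hx hy => exact add_mem hx hy

lemma leftSpan_pow {I : Ideal Λ} {u : Λ ⊗[K] Γ} (hu : u ∈ leftSpan K Γ I) (k : ℕ) :
    u ^ k ∈ leftSpan K Γ (I ^ k) := by
  induction k with
  | zero => rw [pow_zero, Submodule.pow_zero, Ideal.one_eq_top]; exact leftSpan_top _
  | succ k ih => rw [pow_succ, Submodule.pow_succ]; exact leftSpan_mul ih hu

lemma tmul_mem_jacobson_left [FiniteDimensional K Λ] {a : Λ} (ha : a ∈ Ring.jacobson Λ) (b : Γ) :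
    a ⊗ₜ[K] b ∈ Ring.jacobson (Λ ⊗[K] Γ) := by
  have := IsArtinianRing.of_finite K Λ
  obtain ⟨k, hk⟩ := IsSemiprimaryRing.isNilpotent (R := Λ)
  rw [← Ideal.jacobson_bot, Ideal.mem_jacobson_iff]
  intro w
  have h1 : w * (a ⊗ₜ[K] b) ∈ leftSpan K Γ (Ring.jacobson Λ) := by
    have := leftSpan_mul (leftSpan_top w)
      (Submodule.subset_span ⟨a, ha, b, rfl⟩ : a ⊗ₜ[K] b ∈ leftSpan K Γ (Ring.jacobson Λ))
    rwa [Ideal.top_mul] at this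
  have h2 : IsNilpotent (w * (a ⊗ₜ[K] b)) := by
    refine ⟨k, ?_⟩
    have := leftSpan_pow h1 k
    rw [hk] at this
    have h0 : leftSpan K Γ (0 : Ideal Λ) ≤ ⊥ := by
      refine Submodule.span_le.mpr ?_
      rintro _ ⟨a, ha, b, rfl⟩
      have : a = 0 := ha
      simp [this]
    exact h0 this
  obtain ⟨z, hz⟩ := h2.isUnit_add_one.exists_left_inv
  refine ⟨z, ?_⟩
  have : z * w * (a ⊗ₜ[K] b) + z - 1 = 0 := by
    rw [← hz]; noncomm_ring
  rw [this]; exact zero_mem _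

lemma tmul_mem_jacobson_right [FiniteDimensional K Γ] (a : Λ) {b : Γ}
    (hb : b ∈ Ring.jacobson Γ) : a ⊗ₜ[K] b ∈ Ring.jacobson (Λ ⊗[K] Γ) := by
  have h := tmul_mem_jacobson_left (K := K) hb a
  let f : (Γ ⊗[K] Λ) →+* (Λ ⊗[K] Γ) := (Algebra.TensorProduct.comm K Γ Λ).toRingEquiv.toRingHom
  haveI : RingHomSurjective f := ⟨(Algebra.TensorProduct.comm K Γ Λ).surjective⟩
  exact Ring.le_comap_jacobson f h

lemma jacobson_tensor_le [IsAlgClosed K] [FiniteDimensional K Λ] [FiniteDimensional K Γ] :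
    (Ring.jacobson (Λ ⊗[K] Γ)).restrictScalars K ≤
      LinearMap.range (LinearMap.lTensor Λ ((Ring.jacobson Γ).restrictScalars K).subtype) ⊔
      LinearMap.range (LinearMap.rTensor Γ ((Ring.jacobson Λ).restrictScalars K).subtype) := by
  have := IsArtinianRing.of_finite K Λ
  have := IsArtinianRing.of_finite K Γ
  let p := Ideal.Quotient.mkₐ K (Ring.jacobson Λ)
  let q := Ideal.Quotient.mkₐ K (Ring.jacobson Γ)
  have hp : Function.Surjective p := Ideal.Quotient.mkₐ_surjective _ _
  have hq : Function.Surjective q := Ideal.Quotient.mkₐ_surjective _ _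
  have ep : Function.Exact ((Ring.jacobson Λ).restrictScalars K).subtype p.toLinearMap := by
    intro x
    simp [p, Ideal.Quotient.eq_zero_iff_mem]
  have eq : Function.Exact ((Ring.jacobson Γ).restrictScalars K).subtype q.toLinearMap := by
    intro x
    simp [q, Ideal.Quotient.eq_zero_iff_mem]
  rw [← TensorProduct.map_ker ep hp eq hq]
  intro x hx
  haveI : FiniteDimensional K (Γ ⧸ Ring.jacobson Γ) :=
    Module.Finite.of_surjective q.toLinearMap hq
  haveI : IsSemisimpleRing ((Λ ⧸ Ring.jacobson Λ) ⊗[K] (Γ ⧸ Ring.jacobson Γ)) :=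
    isSemisimpleRing_tensor
  let f : (Λ ⊗[K] Γ) →+* ((Λ ⧸ Ring.jacobson Λ) ⊗[K] (Γ ⧸ Ring.jacobson Γ)) :=
    (Algebra.TensorProduct.map p q).toRingHom
  haveI : RingHomSurjective f := ⟨TensorProduct.map_surjective hp hq⟩
  have h : f x ∈ Ring.jacobson _ := Ring.le_comap_jacobson f hx
  exact (IsSemisimpleRing.jacobson_eq_bot
    ((Λ ⧸ Ring.jacobson Λ) ⊗[K] (Γ ⧸ Ring.jacobson Γ))).le h

lemma tmul_mem_left [FiniteDimensional K Λ]
    {M N : Type*} [AddCommGroup M] [Module K M] [Module Λ M] [IsScalarTower K Λ M]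
    [AddCommGroup N] [Module K N] [Module Γ N] [IsScalarTower K Γ N]
    {J : Ideal (Λ ⊗[K] Γ)} (hJ : J = Ring.jacobson (Λ ⊗[K] Γ))
    {I : Ideal Λ} (hI : I = Ring.jacobson Λ) {m : M} (hm : m ∈ I • (⊤ : Submodule Λ M)) (n : N) :
    m ⊗ₜ[K] n ∈ J • (⊤ : Submodule (Λ ⊗[K] Γ) (M ⊗[K] N)) := by
  induction hm using Submodule.smul_induction_on' with
  | smul a ha m _ =>
    have h := tensorTensor_smul_tmul (K := K) a (1 : Γ) m n
    rw [one_smul] at h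
    rw [← h]
    refine Submodule.smul_mem_smul ?_ trivial
    rw [hJ]
    exact tmul_mem_jacobson_left (hI ▸ ha) 1
  | add x _ y _ hx hy => rw [TensorProduct.add_tmul]; exact add_mem hx hy

lemma tmul_mem_right [FiniteDimensional K Γ]
    {M N : Type*} [AddCommGroup M] [Module K M] [Module Λ M] [IsScalarTower K Λ M]
    [AddCommGroup N] [Module K N] [Module Γ N] [IsScalarTower K Γ N]
    {J : Ideal (Λ ⊗[K] Γ)} (hJ : J = Ring.jacobson (Λ ⊗[K] Γ))
    {I : Ideal Γ} (hI : I = Ring.jacobson Γ) (m : M) {n : N} (hn : n ∈ I • (⊤ : Submodule Γ N)) :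
    m ⊗ₜ[K] n ∈ J • (⊤ : Submodule (Λ ⊗[K] Γ) (M ⊗[K] N)) := by
  induction hn using Submodule.smul_induction_on' with
  | smul a ha n _ =>
    have h := tensorTensor_smul_tmul (K := K) (1 : Λ) a m n
    rw [one_smul] at h
    rw [← h]
    refine Submodule.smul_mem_smul ?_ trivial
    rw [hJ]
    exact tmul_mem_jacobson_right 1 (hI ▸ ha)
  | add x _ y _ hx hy => rw [TensorProduct.tmul_add]; exact add_mem hx hy

lemma smul_tmul_mem [IsAlgClosed K] [FiniteDimensional K Λ] [FiniteDimensional K Γ]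
    {M N : Type*} [AddCommGroup M] [Module K M] [Module Λ M] [IsScalarTower K Λ M]
    [AddCommGroup N] [Module K N] [Module Γ N] [IsScalarTower K Γ N]
    (W : Submodule K (M ⊗[K] N))
    (h1 : ∀ a ∈ Ring.jacobson Λ, ∀ (b : Γ) (m : M) (n : N), (a • m) ⊗ₜ[K] (b • n) ∈ W)
    (h2 : ∀ (a : Λ), ∀ b ∈ Ring.jacobson Γ, ∀ (m : M) (n : N), (a • m) ⊗ₜ[K] (b • n) ∈ W)
    {j : Λ ⊗[K] Γ} (hj : j ∈ Ring.jacobson (Λ ⊗[K] Γ)) (m : M) (n : N) :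
    j • (m ⊗ₜ[K] n) ∈ W := by
  let φ : (Λ ⊗[K] Γ) →ₗ[K] (M ⊗[K] N) :=
    (LinearMap.toSpanSingleton (Λ ⊗[K] Γ) (M ⊗[K] N) (m ⊗ₜ[K] n)).restrictScalars K
  have hφ (a : Λ) (b : Γ) : φ (a ⊗ₜ[K] b) = (a • m) ⊗ₜ[K] (b • n) :=
    tensorTensor_smul_tmul a b m n
  change j ∈ W.comap φ
  refine (jacobson_tensor_le.trans (sup_le ?_ ?_)) hj
  · rintro _ ⟨t, rfl⟩
    induction t using TensorProduct.induction_on with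
    | zero => rw [map_zero]; exact zero_mem _
    | add x y hx hy => rw [map_add]; exact add_mem hx hy
    | tmul a b =>
      rw [LinearMap.lTensor_tmul, Submodule.mem_comap, hφ]
      exact h2 a _ b.2 m n
  · rintro _ ⟨t, rfl⟩
    induction t using TensorProduct.induction_on with
    | zero => rw [map_zero]; exact zero_mem _
    | add x y hx hy => rw [map_add]; exact add_mem hx hy
    | tmul a b =>
      rw [LinearMap.rTensor_tmul, Submodule.mem_comap, hφ]
      exact h1 _ a.2 b m n

end Helpers

open TensorProduct in
/-- For finite dimensional algebras `Λ`, `Γ` over an algebraically closed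
field `K` and finitely generated modules `M` over `Λ`, `N` over `Γ`:
`rad (M ⊗ N) = rad M ⊗ N + M ⊗ rad N` as submodules of the `(Λ⊗Γ)`-module `M ⊗[K] N`
(expressed as an equality of the underlying `K`-subspaces), where `rad M = (rad Λ)M`. -/
theorem radical_tensorProduct
    (K Λ Γ M N : Type*) [Field K] [IsAlgClosed K] [Ring Λ] [Ring Γ]
    [Algebra K Λ] [Algebra K Γ] [FiniteDimensional K Λ] [FiniteDimensional K Γ]
    [AddCommGroup M] [Module K M] [Module Λ M] [IsScalarTower K Λ M] [Module.Finite Λ M]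
    [AddCommGroup N] [Module K N] [Module Γ N] [IsScalarTower K Γ N] [Module.Finite Γ N] :
    Submodule.restrictScalars K
        ((⊥ : Ideal (Λ ⊗[K] Γ)).jacobson • (⊤ : Submodule (Λ ⊗[K] Γ) (M ⊗[K] N))) =
      LinearMap.range (TensorProduct.map
          ((((⊥ : Ideal Λ).jacobson • (⊤ : Submodule Λ M)).restrictScalars K).subtype)
          (LinearMap.id : N →ₗ[K] N)) ⊔
        LinearMap.range (TensorProduct.map (LinearMap.id : M →ₗ[K] M)
          ((((⊥ : Ideal Γ).jacobson • (⊤ : Submodule Γ N)).restrictScalars K).subtype)) := by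
  have hJ := Ideal.jacobson_bot (R := Λ ⊗[K] Γ)
  have hI := Ideal.jacobson_bot (R := Λ)
  have hI' := Ideal.jacobson_bot (R := Γ)
  generalize (⊥ : Ideal (Λ ⊗[K] Γ)).jacobson = J at *
  generalize (⊥ : Ideal Λ).jacobson = I at *
  generalize (⊥ : Ideal Γ).jacobson = I' at *
  apply le_antisymm
  · intro x hx
    rw [Submodule.restrictScalars_mem] at hx
    refine Submodule.smul_induction_on hx ?_ (fun x y hx hy => add_mem hx hy)
    intro j hj v hv
    clear hv
    rw [hJ] at hj
    induction v using TensorProduct.induction_on with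
    | zero => rw [smul_zero]; exact zero_mem _
    | add x y hx hy => rw [smul_add]; exact add_mem hx hy
    | tmul m n =>
      refine smul_tmul_mem _ ?_ ?_ hj m n
      · intro a ha b m n
        apply Submodule.mem_sup_left
        have hm : a • m ∈ (I • (⊤ : Submodule Λ M)).restrictScalars K := by
          rw [Submodule.restrictScalars_mem, hI]
          exact Submodule.smul_mem_smul ha Submodule.mem_top
        exact ⟨(⟨a • m, hm⟩ : (I • (⊤ : Submodule Λ M)).restrictScalars K) ⊗ₜ[K] (b • n),
          TensorProduct.map_tmul _ _ _ _⟩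
      · intro a b hb m n
        apply Submodule.mem_sup_right
        have hn : b • n ∈ (I' • (⊤ : Submodule Γ N)).restrictScalars K := by
          rw [Submodule.restrictScalars_mem, hI']
          exact Submodule.smul_mem_smul hb Submodule.mem_top
        exact ⟨(a • m) ⊗ₜ[K] (⟨b • n, hn⟩ : (I' • (⊤ : Submodule Γ N)).restrictScalars K),
          TensorProduct.map_tmul _ _ _ _⟩
  · refine sup_le ?_ ?_
    · rintro _ ⟨t, rfl⟩
      induction t using TensorProduct.induction_on with
      | zero => rw [map_zero]; exact zero_mem _
      | add x y hx hy => rw [map_add]; exact add_mem hx hy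
      | tmul m n =>
        obtain ⟨m, hm⟩ := m
        rw [TensorProduct.map_tmul]
        exact tmul_mem_left hJ hI hm n
    · rintro _ ⟨t, rfl⟩
      induction t using TensorProduct.induction_on with
      | zero => rw [map_zero]; exact zero_mem _
      | add x y hx hy => rw [map_add]; exact add_mem hx hy
      | tmul m n =>
        obtain ⟨n, hn⟩ := n
        rw [TensorProduct.map_tmul]
        exact tmul_mem_right hJ hI' m hn
end

section
/- Let Λ and Γ be finite dimensional algebras over an algebraically closed field K, let M be a nonzero finitely generated left Λ-module and N a nonzero finitely generated left Γ-module. Then M⊗N is a semisimple (Λ⊗Γ)-module if and only if M is a semisimple Λ-module and N is a semisimple Γ-module. -/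
open TensorProduct

section Helpers

/-- Abstract transfer of semisimplicity along a "retract" `M → X → M`. -/
lemma isSemisimpleModule_of_retract {R A M X : Type*} [Ring R] [Ring A]
    [AddCommGroup M] [Module R M] [AddCommGroup X] [Module A X] [IsSemisimpleModule A X]
    (j : R → A) (i : M →+ X) (q : X →+ M)
    (hi : ∀ r m, i (r • m) = j r • i m) (hq : ∀ r x, q (j r • x) = r • q x)
    (hqi : ∀ m, q (i m) = m)
    (hspan : ∀ (P : Submodule R M) (a : A) (m : M), m ∈ P → q (a • i m) ∈ P) :
    IsSemisimpleModule R M := by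
  rw [isSemisimpleModule_iff]
  refine ⟨fun P => ?_⟩
  let P' : Submodule A X := Submodule.span A (i '' (P : Set M))
  have hP' : ∀ x ∈ P', q x ∈ P := by
    have key : ∀ x ∈ P', ∀ a : A, q (a • x) ∈ P := by
      intro x hx
      induction hx using Submodule.span_induction with
      | mem x hx =>
        obtain ⟨m, hm, rfl⟩ := hx
        exact fun a => hspan P a m hm
      | zero => intro a; simp
      | add x y _ _ h1 h2 => intro a; rw [smul_add, map_add]; exact P.add_mem (h1 a) (h2 a)
      | smul b x _ h => intro a; rw [smul_smul]; exact h _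
    intro x hx
    simpa using key x hx 1
  obtain ⟨Q, hQ⟩ := exists_isCompl P'
  let e : X →ₗ[A] X := P'.projection Q hQ
  let f : M →ₗ[R] P :=
    { toFun := fun m => ⟨q (e (i m)), hP' _ (Submodule.projection_apply_mem hQ _)⟩
      map_add' := fun x y => by ext; simp
      map_smul' := fun r x => by ext; simp [hi, hq] }
  refine ⟨LinearMap.ker f, LinearMap.isCompl_of_proj (f := f) fun x => ?_⟩
  ext
  have : e (i x) = i x :=
    Submodule.projection_apply_of_mem_left hQ (Submodule.subset_span ⟨x, x.2, rfl⟩)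
  simp [f, this, hqi]

variable {K Λ Γ M N : Type*} [Field K] [Ring Λ] [Ring Γ] [Algebra K Λ] [Algebra K Γ]
  [AddCommGroup M] [Module K M] [Module Λ M] [IsScalarTower K Λ M]
  [AddCommGroup N] [Module K N] [Module Γ N] [IsScalarTower K Γ N]

lemma semisimple_left [Nontrivial N] [IsSemisimpleModule (Λ ⊗[K] Γ) (M ⊗[K] N)] :
    IsSemisimpleModule Λ M := by
  obtain ⟨n, hn⟩ := exists_ne (0 : N)
  obtain ⟨φ, hφ⟩ := Module.Projective.exists_dual_eq_one K hn
  let i : M →ₗ[K] M ⊗[K] N := (TensorProduct.mk K M N).flip n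
  let q : M ⊗[K] N →ₗ[K] M := (TensorProduct.rid K M).toLinearMap ∘ₗ TensorProduct.map LinearMap.id φ
  have hqt : ∀ (m : M) (n' : N), q (m ⊗ₜ n') = φ n' • m := fun m n' => by simp [q]
  refine isSemisimpleModule_of_retract (A := Λ ⊗[K] Γ) (X := M ⊗[K] N)
    (fun r => r ⊗ₜ 1) i.toAddMonoidHom q.toAddMonoidHom ?_ ?_ ?_ ?_
  · intro r m
    change (r • m) ⊗ₜ[K] n = (r ⊗ₜ[K] (1 : Γ)) • (m ⊗ₜ[K] n)
    rw [tensorTensor_smul_tmul, one_smul]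
  · intro r x
    change q ((r ⊗ₜ[K] (1 : Γ)) • x) = r • q x
    induction x using TensorProduct.induction_on with
    | zero => simp
    | tmul m n => rw [tensorTensor_smul_tmul, one_smul, hqt, hqt, smul_comm]
    | add x y hx hy => rw [smul_add, map_add, map_add, smul_add, hx, hy]
  · intro m
    change q (m ⊗ₜ n) = m
    rw [hqt, hφ, one_smul]
  · intro P a m hm
    change q (a • (m ⊗ₜ[K] n)) ∈ P
    induction a using TensorProduct.induction_on with
    | zero => simp
    | tmul a b =>
      rw [tensorTensor_smul_tmul, hqt]
      exact P.smul_of_tower_mem _ (P.smul_mem _ hm)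
    | add x y hx hy => rw [add_smul, map_add]; exact P.add_mem hx hy

lemma semisimple_right [Nontrivial M] [IsSemisimpleModule (Λ ⊗[K] Γ) (M ⊗[K] N)] :
    IsSemisimpleModule Γ N := by
  obtain ⟨m, hm⟩ := exists_ne (0 : M)
  obtain ⟨φ, hφ⟩ := Module.Projective.exists_dual_eq_one K hm
  let i : N →ₗ[K] M ⊗[K] N := TensorProduct.mk K M N m
  let q : M ⊗[K] N →ₗ[K] N := (TensorProduct.lid K N).toLinearMap ∘ₗ TensorProduct.map φ LinearMap.id
  have hqt : ∀ (m : M) (n' : N), q (m ⊗ₜ n') = φ m • n' := fun m n' => by simp [q]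
  refine isSemisimpleModule_of_retract (A := Λ ⊗[K] Γ) (X := M ⊗[K] N)
    (fun r => 1 ⊗ₜ r) i.toAddMonoidHom q.toAddMonoidHom ?_ ?_ ?_ ?_
  · intro r n
    change m ⊗ₜ[K] (r • n) = ((1 : Λ) ⊗ₜ[K] r) • (m ⊗ₜ[K] n)
    rw [tensorTensor_smul_tmul, one_smul]
  · intro r x
    change q (((1 : Λ) ⊗ₜ[K] r) • x) = r • q x
    induction x using TensorProduct.induction_on with
    | zero => simp
    | tmul m n => rw [tensorTensor_smul_tmul, one_smul, hqt, hqt, smul_comm]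
    | add x y hx hy => rw [smul_add, map_add, map_add, smul_add, hx, hy]
  · intro n
    change q (m ⊗ₜ n) = n
    rw [hqt, hφ, one_smul]
  · intro P a n hn
    change q (a • (m ⊗ₜ[K] n)) ∈ P
    induction a using TensorProduct.induction_on with
    | zero => simp
    | tmul a b =>
      rw [tensorTensor_smul_tmul, hqt]
      exact P.smul_of_tower_mem _ (P.smul_mem _ hn)
    | add x y hx hy => rw [add_smul, map_add]; exact P.add_mem hx hy

/-- Burnside: every `K`-endomorphism of a simple module is given by the algebra. -/
lemma exists_smul_eq_of_simple [IsAlgClosed K] [FiniteDimensional K M] [IsSimpleModule Λ M]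
    (f : M →ₗ[K] M) : ∃ a : Λ, ∀ m, a • m = f m := by
  let F : Module.End (Module.End Λ M) M :=
    { toFun := f
      map_add' := f.map_add
      map_smul' := fun g m => by
        obtain ⟨c, rfl⟩ :=
          (IsSimpleModule.algebraMap_end_bijective_of_isAlgClosed (A := Λ) (V := M) K).2 g
        exact f.map_smul c m }
  obtain ⟨s, hs⟩ := Module.Finite.fg_top (R := K) (M := M)
  obtain ⟨r, hr⟩ := jacobson_density (R := Λ) F s
  refine ⟨r, fun m => ?_⟩
  have hm : m ∈ Submodule.span K (s : Set M) := hs ▸ Submodule.mem_top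
  induction hm using Submodule.span_induction with
  | mem x hx => exact (hr x hx).symm
  | zero => simp
  | add x y _ _ h1 h2 => rw [smul_add, map_add, h1, h2]
  | smul c x _ h => rw [map_smul, ← h, smul_comm]

lemma simple_tensor [IsAlgClosed K] [FiniteDimensional K M] [IsSimpleModule Λ M]
    [IsSimpleModule Γ N] : IsSimpleModule (Λ ⊗[K] Γ) (M ⊗[K] N) := by
  have := IsSimpleModule.nontrivial Λ M
  have := IsSimpleModule.nontrivial Γ N
  rw [isSimpleModule_iff_toSpanSingleton_surjective]
  refine ⟨inferInstance, fun x hx => ?_⟩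
  rw [← LinearMap.range_eq_top, eq_top_iff]
  -- a functional on `M` that does not kill `x`
  have hex : ∃ φ : Module.Dual K M, TensorProduct.map φ (LinearMap.id : N →ₗ[K] N) x ≠ 0 := by
    by_contra! h
    apply hx
    let b := Module.finBasis K M
    apply (TensorProduct.equivFinsuppOfBasisLeft (N := N) b).injective
    rw [map_zero]
    ext i
    have := congrArg (TensorProduct.lid K N) (h (b.coord i))
    rw [map_zero] at this
    rw [Finsupp.zero_apply, ← this]
    clear this h hx
    induction x using TensorProduct.induction_on with
    | zero => simp
    | tmul m n => simp
    | add x y hx hy => simp only [map_add, Finsupp.add_apply, hx, hy]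
  obtain ⟨φ, hφ⟩ := hex
  set t : N := TensorProduct.lid K N (TensorProduct.map φ (LinearMap.id : N →ₗ[K] N) x) with ht
  have ht0 : t ≠ 0 := by simpa [ht] using hφ
  rintro y -
  induction y using TensorProduct.induction_on with
  | zero => exact zero_mem _
  | add y z hy hz => exact add_mem hy hz
  | tmul m n =>
    obtain ⟨a, ha⟩ := exists_smul_eq_of_simple (K := K) (Λ := Λ) (φ.smulRight m)
    obtain ⟨g, hg⟩ := IsSimpleModule.toSpanSingleton_surjective Γ ht0 n
    refine ⟨a ⊗ₜ g, ?_⟩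
    rw [LinearMap.toSpanSingleton_apply] at hg ⊢
    rw [← hg, ht]
    clear ht0 hφ hg hx ht t
    induction x using TensorProduct.induction_on with
    | zero => simp
    | tmul m' n' =>
      rw [tensorTensor_smul_tmul, ha]
      simp only [LinearMap.smulRight_apply, TensorProduct.map_tmul, LinearMap.id_apply,
        TensorProduct.lid_tmul, TensorProduct.smul_tmul]
      rw [smul_comm]
    | add x y hx hy => rw [smul_add, hx, hy]; simp only [map_add, smul_add, TensorProduct.tmul_add]

/-- The inclusion of the tensor product of submodules. -/
noncomputable def subTensorMap (S : Submodule Λ M) (T : Submodule Γ N) :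
    (S ⊗[K] T) →ₗ[Λ ⊗[K] Γ] (M ⊗[K] N) where
  toFun := TensorProduct.map (S.subtype.restrictScalars K) (T.subtype.restrictScalars K)
  map_add' := map_add _
  map_smul' := fun a x => by
    rw [RingHom.id_apply]
    induction a using TensorProduct.induction_on with
    | zero => simp
    | add a b ha hb => rw [add_smul, map_add, ha, hb, add_smul]
    | tmul a g =>
      induction x using TensorProduct.induction_on with
      | zero => simp
      | add x y hx hy => rw [smul_add, map_add, hx, hy, map_add, smul_add]
      | tmul s t =>
        rw [tensorTensor_smul_tmul, TensorProduct.map_tmul, TensorProduct.map_tmul,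
          tensorTensor_smul_tmul]
        simp

lemma semisimple_tensor [IsAlgClosed K] [FiniteDimensional K M] [IsSemisimpleModule Λ M]
    [IsSemisimpleModule Γ N] : IsSemisimpleModule (Λ ⊗[K] Γ) (M ⊗[K] N) := by
  let s : Set (Submodule (Λ ⊗[K] Γ) (M ⊗[K] N)) := {p | IsSemisimpleModule (Λ ⊗[K] Γ) p}
  refine isSemisimpleModule_of_isSemisimpleModule_submodule (s := s) (p := id)
    (fun _ h => h) ?_
  rw [eq_top_iff]
  rintro y -
  induction y using TensorProduct.induction_on with
  | zero => exact zero_mem _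
  | add y z hy hz => exact add_mem hy hz
  | tmul m n =>
    have hm : m ∈ sSup { p : Submodule Λ M | IsSimpleModule Λ p } := by
      rw [IsSemisimpleModule.sSup_simples_eq_top]; trivial
    have hn : n ∈ sSup { p : Submodule Γ N | IsSimpleModule Γ p } := by
      rw [IsSemisimpleModule.sSup_simples_eq_top]; trivial
    rw [sSup_eq_iSup'] at hm hn
    induction hm using Submodule.iSup_induction' with
    | zero => rw [TensorProduct.zero_tmul]; exact zero_mem _
    | add x y _ _ hx hy => rw [TensorProduct.add_tmul]; exact add_mem hx hy
    | mem S m hm =>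
      induction hn using Submodule.iSup_induction' with
      | zero => rw [TensorProduct.tmul_zero]; exact zero_mem _
      | add x y _ _ hx hy => rw [TensorProduct.tmul_add]; exact add_mem hx hy
      | mem T n hn =>
        have hS : IsSimpleModule Λ S.1 := S.2
        have hT : IsSimpleModule Γ T.1 := T.2
        have : FiniteDimensional K S.1 :=
          inferInstanceAs (FiniteDimensional K (S.1.restrictScalars K))
        have hST : IsSimpleModule (Λ ⊗[K] Γ) (S.1 ⊗[K] T.1) := simple_tensor
        have hr : LinearMap.range (subTensorMap (K := K) S.1 T.1) ∈ s :=
          IsSemisimpleModule.range _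
        refine (le_biSup id hr) ?_
        exact ⟨(⟨m, hm⟩ : S.1) ⊗ₜ (⟨n, hn⟩ : T.1), by simp [subTensorMap]⟩

end Helpers

open TensorProduct in
/-- For finite dimensional algebras `Λ`, `Γ` over an algebraically closed
field `K` and nonzero finitely generated modules `M`, `N`:
`M ⊗[K] N` is a semisimple `(Λ⊗Γ)`-module iff `M` and `N` are semisimple. -/
theorem isSemisimpleModule_tensorProduct_iff
    (K Λ Γ M N : Type*) [Field K] [IsAlgClosed K] [Ring Λ] [Ring Γ]
    [Algebra K Λ] [Algebra K Γ] [FiniteDimensional K Λ] [FiniteDimensional K Γ]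
    [AddCommGroup M] [Module K M] [Module Λ M] [IsScalarTower K Λ M] [Module.Finite Λ M]
    [Nontrivial M]
    [AddCommGroup N] [Module K N] [Module Γ N] [IsScalarTower K Γ N] [Module.Finite Γ N]
    [Nontrivial N] :
    IsSemisimpleModule (Λ ⊗[K] Γ) (M ⊗[K] N) ↔
      (IsSemisimpleModule Λ M ∧ IsSemisimpleModule Γ N) := by
  have : FiniteDimensional K M := Module.Finite.trans Λ M
  constructor
  · intro h
    exact ⟨semisimple_left (K := K) (Γ := Γ) (N := N), semisimple_right (K := K) (Λ := Λ) (M := M)⟩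
  · rintro ⟨h1, h2⟩
    exact semisimple_tensor
end

section
/- Let Λ and Γ be finite dimensional algebras over an algebraically closed field K, let P_Λ, I_Λ be nonzero finitely generated left Λ-modules and P_Γ, I_Γ nonzero finitely generated left Γ-modules. Then: (1) P_Λ and P_Γ are projective modules if and only if P_Λ⊗P_Γ is a projective (Λ⊗Γ)-module; (2) I_Λ and I_Γ are injective modules if and only if I_Λ⊗I_Γ is an injective (Λ⊗Γ)-module. -/
open TensorProduct

section Helpers

universe v

variable {K A M : Type*} [Field K] [Ring A] [Algebra K A]
  [AddCommGroup M] [Module K M] [Module A M] [IsScalarTower K A M]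

variable (K A M) in
/-- The action map `A ⊗ M → M`. -/
noncomputable def actMap : A ⊗[K] M →ₗ[K] M :=
  TensorProduct.lift (LinearMap.mk₂ K (fun (a : A) (m : M) => a • m)
    (fun a b m => add_smul a b m) (fun c a m => smul_assoc c a m)
    (fun a m n => smul_add a m n) (fun c a m => smul_comm a c m))

lemma actMap_tmul (a : A) (m : M) : actMap K A M (a ⊗ₜ[K] m) = a • m := rfl

variable (K A M) in
/-- A `K`-linear formulation of the splitting of the action map. -/
def ProjChar : Prop :=
  ∃ S : M →ₗ[K] A ⊗[K] M,
    (∀ (a : A) (m : M), S (a • m) = LinearMap.rTensor M (LinearMap.mulLeft K a) (S m)) ∧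
    ∀ m, actMap K A M (S m) = m

lemma rTensor_mulLeft_eq_smul (a : A) (x : A ⊗[K] M) :
    LinearMap.rTensor M (LinearMap.mulLeft K a) x = a • x := by
  induction x using TensorProduct.induction_on with
  | zero => simp
  | tmul b m => simp [TensorProduct.smul_tmul']
  | add x y hx hy => rw [map_add, hx, hy, smul_add]

lemma projective_iff_projChar : Module.Projective A M ↔ ProjChar K A M := by
  let π : A ⊗[K] M →ₗ[A] M :=
    { toFun := actMap K A M
      map_add' := map_add _
      map_smul' := by
        intro a x
        induction x using TensorProduct.induction_on with
        | zero => simp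
        | tmul b m =>
          rw [TensorProduct.smul_tmul', actMap_tmul, actMap_tmul, smul_eq_mul, mul_smul]; rfl
        | add x y hx hy => simp only [smul_add, map_add, hx, hy] }
  have hπ : Function.Surjective π := fun m => ⟨1 ⊗ₜ m, by
    show actMap K A M _ = _
    rw [actMap_tmul, one_smul]⟩
  constructor
  · intro h
    obtain ⟨s, hs⟩ := Module.projective_lifting_property π LinearMap.id hπ
    refine ⟨{ toFun := s, map_add' := map_add s, map_smul' := ?_ }, ?_, ?_⟩
    · intro c m
      rw [← algebraMap_smul A c m, map_smul, algebraMap_smul]; rfl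
    · intro a m
      rw [rTensor_mulLeft_eq_smul]
      exact map_smul s a m
    · intro m
      exact LinearMap.congr_fun hs m
  · rintro ⟨S, h1, h2⟩
    refine Module.Projective.of_split (M := A ⊗[K] M)
      { toFun := S, map_add' := map_add S, map_smul' := ?_ } π ?_
    · intro a m
      rw [h1, rTensor_mulLeft_eq_smul]; rfl
    · ext m
      exact h2 m

variable (K) in
/-- `a ↦ a • v`. -/
def eta (A : Type*) [Ring A] [Algebra K A] [Module A M] [IsScalarTower K A M] (v : M) :
    A →ₗ[K] M where
  toFun a := a • v
  map_add' a b := add_smul a b v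
  map_smul' c a := smul_assoc c a v

lemma eta_apply (v : M) (a : A) : eta K A v a = a • v := rfl

variable (K A M) in
/-- A `K`-linear formulation of the splitting of the embedding into the coinduced module. -/
def InjChar : Prop :=
  ∃ R : (A →ₗ[K] M) →ₗ[K] M,
    (∀ (a : A) (f : A →ₗ[K] M), R (f ∘ₗ LinearMap.mulRight K a) = a • R f) ∧
    ∀ v, R (eta K A v) = v

variable (K A M) in
/-- The coinduced module. -/
def Coind : Type _ := A →ₗ[K] M

noncomputable instance : AddCommGroup (Coind K A M) :=
  inferInstanceAs (AddCommGroup (A →ₗ[K] M))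

noncomputable instance : Module A (Coind K A M) where
  smul a f := LinearMap.comp (show A →ₗ[K] M from f) (LinearMap.mulRight K a)
  one_smul f := LinearMap.ext fun b => congrArg (show A →ₗ[K] M from f) (mul_one b)
  mul_smul a a' f := LinearMap.ext fun b =>
    congrArg (show A →ₗ[K] M from f) (mul_assoc b a a').symm
  smul_zero a := rfl
  smul_add a f g := rfl
  add_smul a a' f := LinearMap.ext fun b =>
    (congrArg (show A →ₗ[K] M from f) (mul_add b a a')).trans (map_add _ _ _)
  zero_smul f := LinearMap.ext fun b =>
    (congrArg (show A →ₗ[K] M from f) (mul_zero b)).trans (map_zero _)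

lemma baer_iff_injChar : Module.Baer A M ↔ InjChar K A M := by
  constructor
  · intro h
    let η : M →ₗ[A] Coind K A M :=
      { toFun := fun v => eta K A v
        map_add' := fun v w => LinearMap.ext fun a => smul_add a v w
        map_smul' := fun a v => LinearMap.ext fun b => (mul_smul b a v).symm }
    have hη : Function.Injective η := by
      intro v w hvw
      have := LinearMap.congr_fun (show eta K A v = eta K A w from hvw) 1
      simpa [eta_apply] using this
    obtain ⟨r, hr⟩ := h.extension_property η hη LinearMap.id
    refine ⟨{ toFun := fun f => r f, map_add' := fun f g => map_add r f g, map_smul' := ?_ },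
      ?_, ?_⟩
    · intro c f
      have h1 : (show Coind K A M from c • f) = (algebraMap K A c) • (show Coind K A M from f) := by
        refine LinearMap.ext fun b => ?_
        show c • f b = f (b * algebraMap K A c)
        rw [← Algebra.commutes, ← Algebra.smul_def, map_smul]
      show r (show Coind K A M from c • f) = c • r f
      rw [h1, map_smul, algebraMap_smul]
    · intro a f
      exact r.map_smul a (show Coind K A M from f)
    · intro v
      exact LinearMap.congr_fun hr v
  · rintro ⟨R, h1, h2⟩ L g
    obtain ⟨F, hF⟩ := LinearMap.exists_extend (p := L.restrictScalars K) (g.restrictScalars K)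
    have hF' : ∀ (x : A) (hx : x ∈ L), F x = g ⟨x, hx⟩ := fun x hx =>
      LinearMap.congr_fun hF ⟨x, hx⟩
    refine ⟨{ toFun := fun y => R (F ∘ₗ LinearMap.mulRight K y), map_add' := ?_,
              map_smul' := ?_ }, ?_⟩
    · intro x y
      rw [← map_add]
      congr 1
      ext b
      simp [mul_add]
    · intro a y
      rw [RingHom.id_apply, ← h1]
      congr 1
      ext b
      simp [mul_assoc]
    · intro x hx
      show R (F ∘ₗ LinearMap.mulRight K x) = _
      rw [← h2 (g ⟨x, hx⟩)]
      congr 1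
      ext b
      have : F (b * x) = g ⟨b * x, L.mul_mem_left b hx⟩ := hF' _ _
      simp only [LinearMap.comp_apply, LinearMap.mulRight_apply, eta_apply, this, ← map_smul]
      rfl

lemma small_of_vectorSpace (K A : Type*) (M : Type v) [Field K] [AddCommGroup A] [Module K A]
    [FiniteDimensional K A] [AddCommGroup M] [Module K M] [Nontrivial M] : Small.{v} A := by
  obtain ⟨m, hm⟩ := exists_ne (0 : M)
  have : Small.{v} K := small_of_injective (f := fun c : K => c • m) (smul_left_injective K hm)
  have e := (Module.finBasis K A).equivFun
  exact small_of_injective e.injective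

lemma injective_iff_injChar [FiniteDimensional K A] [Nontrivial M] :
    Module.Injective A M ↔ InjChar K A M := by
  have : Small A := small_of_vectorSpace K A M
  rw [← Module.Baer.iff_injective, baer_iff_injChar (K := K)]

variable {B N : Type*} [Ring B] [Algebra K B]
  [AddCommGroup N] [Module K N] [Module B N] [IsScalarTower K B N]

lemma exists_functional (K : Type*) {M : Type*} [Field K] [AddCommGroup M] [Module K M]
    [Nontrivial M] : ∃ (m : M) (φ : M →ₗ[K] K), φ m = 1 := by
  obtain ⟨m, hm⟩ := exists_ne (0 : M)
  obtain ⟨φ, hφ⟩ := Module.Projective.exists_dual_eq_one K hm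
  exact ⟨m, φ, hφ⟩

/-- `m ⊗ n ↦ φ n • m`. -/
noncomputable def contrR (φ : N →ₗ[K] K) : M ⊗[K] N →ₗ[K] M :=
  (TensorProduct.rid K M).toLinearMap ∘ₗ LinearMap.lTensor M φ

lemma contrR_tmul (φ : N →ₗ[K] K) (m : M) (n : N) : contrR φ (m ⊗ₜ[K] n) = φ n • m := by
  simp [contrR]

/-- `m ⊗ n ↦ φ m • n`. -/
noncomputable def contrL (φ : M →ₗ[K] K) : M ⊗[K] N →ₗ[K] N :=
  (TensorProduct.lid K N).toLinearMap ∘ₗ LinearMap.rTensor N φ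

lemma contrL_tmul (φ : M →ₗ[K] K) (m : M) (n : N) : contrL φ (m ⊗ₜ[K] n) = φ m • n := by
  simp [contrL]

lemma contrR_smul (φ : N →ₗ[K] K) (a : A) (x : M ⊗[K] N) :
    contrR φ ((a ⊗ₜ[K] (1 : B)) • x) = a • contrR φ x := by
  induction x using TensorProduct.induction_on with
  | zero => simp
  | tmul m n => rw [tensorTensor_smul_tmul, contrR_tmul, contrR_tmul, one_smul, smul_comm]
  | add x y hx hy => simp only [smul_add, map_add, hx, hy]

lemma contrL_smul (φ : M →ₗ[K] K) (b : B) (x : M ⊗[K] N) :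
    contrL φ (((1 : A) ⊗ₜ[K] b) • x) = b • contrL φ x := by
  induction x using TensorProduct.induction_on with
  | zero => simp
  | tmul m n => rw [tensorTensor_smul_tmul, contrL_tmul, contrL_tmul, one_smul, smul_comm]
  | add x y hx hy => simp only [smul_add, map_add, hx, hy]

lemma mulRight_tmul (a : A) (b : B) :
    LinearMap.mulRight K (a ⊗ₜ[K] b) =
      TensorProduct.map (LinearMap.mulRight K a) (LinearMap.mulRight K b) := by
  ext; simp

lemma mulLeft_tmul (a : A) (b : B) :
    LinearMap.mulLeft K (a ⊗ₜ[K] b) =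
      TensorProduct.map (LinearMap.mulLeft K a) (LinearMap.mulLeft K b) := by
  ext; simp

lemma eta_tmul (m : M) (n : N) :
    eta K (A ⊗[K] B) (m ⊗ₜ[K] n) = TensorProduct.map (eta K A m) (eta K B n) := by
  refine TensorProduct.ext' fun a b => ?_
  rw [eta_apply, tensorTensor_smul_tmul]; rfl

lemma injChar_tensor [FiniteDimensional K A] [FiniteDimensional K B]
    (hM : InjChar K A M) (hN : InjChar K B N) : InjChar K (A ⊗[K] B) (M ⊗[K] N) := by
  obtain ⟨R1, h1, h1'⟩ := hM
  obtain ⟨R2, h2, h2'⟩ := hN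
  let E := homTensorHomEquiv K A B M N
  have hE : ∀ f g, E (f ⊗ₜ g) = TensorProduct.map f g := by
    intro f g
    simp [E]
  have hE' : ∀ f g, E.symm (TensorProduct.map f g) = f ⊗ₜ g := by
    intro f g
    rw [← hE, LinearEquiv.symm_apply_apply]
  refine ⟨TensorProduct.map R1 R2 ∘ₗ E.symm.toLinearMap, ?_, ?_⟩
  · intro x F
    obtain ⟨t, rfl⟩ := E.surjective F
    induction t using TensorProduct.induction_on with
    | zero => simp
    | tmul f g =>
      induction x using TensorProduct.induction_on with
      | zero =>
        have : LinearMap.mulRight K (0 : A ⊗[K] B) = 0 := by ext; simp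
        simp [this]
      | tmul a b =>
        rw [hE, mulRight_tmul, ← TensorProduct.map_comp]
        simp only [LinearMap.comp_apply, LinearEquiv.coe_coe, hE', TensorProduct.map_tmul, h1, h2,
          tensorTensor_smul_tmul]
      | add x y hx hy =>
        have : LinearMap.mulRight K (x + y) = LinearMap.mulRight K x + LinearMap.mulRight K y := by
          ext; simp [mul_add]
        rw [this, LinearMap.comp_add, map_add, hx, hy, add_smul]
    | add s t hs ht =>
      rw [map_add, LinearMap.add_comp, map_add, map_add, hs, ht, smul_add]
  · intro v
    induction v using TensorProduct.induction_on with
    | zero =>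
      have : eta K (A ⊗[K] B) (0 : M ⊗[K] N) = 0 := by ext; simp [eta_apply]
      simp [this]
    | tmul m n =>
      rw [eta_tmul]
      simp only [LinearMap.comp_apply, LinearEquiv.coe_coe, hE', TensorProduct.map_tmul, h1', h2']
    | add x y hx hy =>
      have : eta K (A ⊗[K] B) (x + y) = eta K (A ⊗[K] B) x + eta K (A ⊗[K] B) y :=
        LinearMap.ext fun a => smul_add a x y
      rw [this, map_add, hx, hy]

lemma injChar_left [Nontrivial N] (h : InjChar K (A ⊗[K] B) (M ⊗[K] N)) : InjChar K A M := by
  obtain ⟨n, φ, hφ⟩ := exists_functional K (M := N)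
  obtain ⟨R, h1, h2⟩ := h
  refine ⟨contrR φ ∘ₗ R ∘ₗ (TensorProduct.mapBilinear (RingHom.id K) A B M N).flip (eta K B n),
    ?_, ?_⟩
  · intro a f
    have : TensorProduct.map (f ∘ₗ LinearMap.mulRight K a) (eta K B n) =
        TensorProduct.map f (eta K B n) ∘ₗ LinearMap.mulRight K (a ⊗ₜ[K] (1 : B)) := by
      rw [mulRight_tmul, ← TensorProduct.map_comp]; simp
    show contrR φ (R (TensorProduct.map _ _)) = a • contrR φ (R (TensorProduct.map _ _))
    rw [this, h1, contrR_smul]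
  · intro v
    show contrR φ (R (TensorProduct.map _ _)) = _
    rw [← eta_tmul, h2, contrR_tmul, hφ, one_smul]

lemma injChar_right [Nontrivial M] (h : InjChar K (A ⊗[K] B) (M ⊗[K] N)) : InjChar K B N := by
  obtain ⟨m, φ, hφ⟩ := exists_functional K (M := M)
  obtain ⟨R, h1, h2⟩ := h
  refine ⟨contrL φ ∘ₗ R ∘ₗ (TensorProduct.mapBilinear (RingHom.id K) A B M N) (eta K A m),
    ?_, ?_⟩
  · intro b f
    have : TensorProduct.map (eta K A m) (f ∘ₗ LinearMap.mulRight K b) =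
        TensorProduct.map (eta K A m) f ∘ₗ LinearMap.mulRight K ((1 : A) ⊗ₜ[K] b) := by
      rw [mulRight_tmul, ← TensorProduct.map_comp]; simp
    show contrL φ (R (TensorProduct.map _ _)) = b • contrL φ (R (TensorProduct.map _ _))
    rw [this, h1, contrL_smul]
  · intro v
    show contrL φ (R (TensorProduct.map _ _)) = _
    rw [← eta_tmul, h2, contrL_tmul, hφ, one_smul]

lemma projChar_tensor (hM : ProjChar K A M) (hN : ProjChar K B N) :
    ProjChar K (A ⊗[K] B) (M ⊗[K] N) := by
  obtain ⟨S1, h1, h1'⟩ := hM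
  obtain ⟨S2, h2, h2'⟩ := hN
  let E := TensorProduct.tensorTensorTensorComm K A M B N
  refine ⟨E.toLinearMap ∘ₗ TensorProduct.map S1 S2, ?_, ?_⟩
  · intro x v
    induction v using TensorProduct.induction_on with
    | zero => simp
    | tmul m n =>
      induction x using TensorProduct.induction_on with
      | zero =>
        have : LinearMap.mulLeft K (0 : A ⊗[K] B) = 0 := by ext; simp
        simp [this]
      | tmul a b =>
        have key : ∀ s t, E ((LinearMap.rTensor M (LinearMap.mulLeft K a) s) ⊗ₜ
            (LinearMap.rTensor N (LinearMap.mulLeft K b) t)) =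
            LinearMap.rTensor (M ⊗[K] N) (LinearMap.mulLeft K (a ⊗ₜ[K] b)) (E (s ⊗ₜ t)) := by
          intro s t
          induction s using TensorProduct.induction_on with
          | zero => simp
          | tmul a' m' =>
            induction t using TensorProduct.induction_on with
            | zero => simp
            | tmul b' n' => simp [E]
            | add x y hx hy => simp only [TensorProduct.tmul_add, map_add, hx, hy]
          | add x y hx hy => simp only [TensorProduct.add_tmul, map_add, hx, hy]
        rw [tensorTensor_smul_tmul]
        simp only [LinearMap.comp_apply, LinearEquiv.coe_coe, TensorProduct.map_tmul, h1, h2, key]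
      | add x y hx hy =>
        have : LinearMap.mulLeft K (x + y) = LinearMap.mulLeft K x + LinearMap.mulLeft K y := by
          ext; simp [add_mul]
        rw [this, LinearMap.rTensor_add, LinearMap.add_apply, ← hx, ← hy, add_smul, map_add]
    | add x y hx hy => simp only [smul_add, map_add, hx, hy]
  · have key : ∀ s t, actMap K (A ⊗[K] B) (M ⊗[K] N) (E (s ⊗ₜ t)) =
        actMap K A M s ⊗ₜ actMap K B N t := by
      intro s t
      induction s using TensorProduct.induction_on with
      | zero => simp
      | tmul a' m' =>
        induction t using TensorProduct.induction_on with
        | zero => simp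
        | tmul b' n' =>
          simp only [E, TensorProduct.tensorTensorTensorComm_tmul, actMap_tmul,
            tensorTensor_smul_tmul]
        | add x y hx hy => simp only [TensorProduct.tmul_add, map_add, hx, hy]
      | add x y hx hy => simp only [TensorProduct.add_tmul, map_add, hx, hy]
    intro v
    induction v using TensorProduct.induction_on with
    | zero => simp
    | tmul m n =>
      simp only [LinearMap.comp_apply, LinearEquiv.coe_coe, TensorProduct.map_tmul, key, h1', h2']
    | add x y hx hy => simp only [map_add, hx, hy]

lemma projChar_left [Nontrivial N] (h : ProjChar K (A ⊗[K] B) (M ⊗[K] N)) : ProjChar K A M := by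
  obtain ⟨n, φ, hφ⟩ := exists_functional K (M := N)
  obtain ⟨S, h1, h2⟩ := h
  let E := TensorProduct.tensorTensorTensorComm K A B M N
  let G : (A ⊗[K] B) ⊗[K] (M ⊗[K] N) →ₗ[K] A ⊗[K] M :=
    contrR (φ ∘ₗ actMap K B N) ∘ₗ E.toLinearMap
  have hG : ∀ a b m n, G ((a ⊗ₜ b) ⊗ₜ (m ⊗ₜ n)) = φ (b • n) • (a ⊗ₜ m) := by
    intro a b m n
    simp [G, E, contrR_tmul, actMap_tmul]
  have key1 : ∀ (a : A) x, G (LinearMap.rTensor (M ⊗[K] N) (LinearMap.mulLeft K (a ⊗ₜ[K] (1 : B))) x)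
      = LinearMap.rTensor M (LinearMap.mulLeft K a) (G x) := by
    intro a x
    refine LinearMap.congr_fun (f := G ∘ₗ LinearMap.rTensor (M ⊗[K] N) (LinearMap.mulLeft K (a ⊗ₜ[K] (1 : B))))
      (g := LinearMap.rTensor M (LinearMap.mulLeft K a) ∘ₗ G) ?_ x
    refine TensorProduct.ext_fourfold' fun a' b' m' n' => ?_
    simp [hG]
  have key2 : ∀ x, actMap K A M (G x) = contrR φ (actMap K (A ⊗[K] B) (M ⊗[K] N) x) := by
    intro x
    refine LinearMap.congr_fun (f := actMap K A M ∘ₗ G)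
      (g := contrR φ ∘ₗ actMap K (A ⊗[K] B) (M ⊗[K] N)) ?_ x
    refine TensorProduct.ext_fourfold' fun a' b' m' n' => ?_
    simp [hG, actMap_tmul, tensorTensor_smul_tmul, contrR_tmul]
  refine ⟨G ∘ₗ S ∘ₗ (TensorProduct.mk K M N).flip n, ?_, ?_⟩
  · intro a m
    show G (S ((a • m) ⊗ₜ n)) = LinearMap.rTensor M (LinearMap.mulLeft K a) (G (S (m ⊗ₜ n)))
    rw [← key1, ← h1, tensorTensor_smul_tmul, one_smul]
  · intro m
    show actMap K A M (G (S (m ⊗ₜ n))) = m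
    rw [key2, h2, contrR_tmul, hφ, one_smul]

lemma projChar_right [Nontrivial M] (h : ProjChar K (A ⊗[K] B) (M ⊗[K] N)) : ProjChar K B N := by
  obtain ⟨m, φ, hφ⟩ := exists_functional K (M := M)
  obtain ⟨S, h1, h2⟩ := h
  let E := TensorProduct.tensorTensorTensorComm K A B M N
  let G : (A ⊗[K] B) ⊗[K] (M ⊗[K] N) →ₗ[K] B ⊗[K] N :=
    contrL (φ ∘ₗ actMap K A M) ∘ₗ E.toLinearMap
  have hG : ∀ a b m n, G ((a ⊗ₜ b) ⊗ₜ (m ⊗ₜ n)) = φ (a • m) • (b ⊗ₜ n) := by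
    intro a b m n
    simp [G, E, contrL_tmul, actMap_tmul]
  have key1 : ∀ (b : B) x, G (LinearMap.rTensor (M ⊗[K] N) (LinearMap.mulLeft K ((1 : A) ⊗ₜ[K] b)) x)
      = LinearMap.rTensor N (LinearMap.mulLeft K b) (G x) := by
    intro b x
    refine LinearMap.congr_fun (f := G ∘ₗ LinearMap.rTensor (M ⊗[K] N) (LinearMap.mulLeft K ((1 : A) ⊗ₜ[K] b)))
      (g := LinearMap.rTensor N (LinearMap.mulLeft K b) ∘ₗ G) ?_ x
    refine TensorProduct.ext_fourfold' fun a' b' m' n' => ?_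
    simp [hG]
  have key2 : ∀ x, actMap K B N (G x) = contrL φ (actMap K (A ⊗[K] B) (M ⊗[K] N) x) := by
    intro x
    refine LinearMap.congr_fun (f := actMap K B N ∘ₗ G)
      (g := contrL φ ∘ₗ actMap K (A ⊗[K] B) (M ⊗[K] N)) ?_ x
    refine TensorProduct.ext_fourfold' fun a' b' m' n' => ?_
    simp [hG, actMap_tmul, tensorTensor_smul_tmul, contrL_tmul]
  refine ⟨G ∘ₗ S ∘ₗ TensorProduct.mk K M N m, ?_, ?_⟩
  · intro b n
    show G (S (m ⊗ₜ (b • n))) = LinearMap.rTensor N (LinearMap.mulLeft K b) (G (S (m ⊗ₜ n)))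
    rw [← key1, ← h1, tensorTensor_smul_tmul, one_smul]
  · intro n
    show actMap K B N (G (S (m ⊗ₜ n))) = n
    rw [key2, h2, contrL_tmul, hφ, one_smul]

end Helpers

open TensorProduct in
/-- For finite dimensional algebras `Λ`, `Γ` over an algebraically closed
field `K` and nonzero finitely generated modules: (1) `P_Λ ⊗ P_Γ` is a projective
`(Λ⊗Γ)`-module iff `P_Λ` and `P_Γ` are projective; (2) `I_Λ ⊗ I_Γ` is an injective
`(Λ⊗Γ)`-module iff `I_Λ` and `I_Γ` are injective. -/
theorem projective_injective_tensorProduct_iff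
    (K Λ Γ P Q I J : Type*) [Field K] [IsAlgClosed K] [Ring Λ] [Ring Γ]
    [Algebra K Λ] [Algebra K Γ] [FiniteDimensional K Λ] [FiniteDimensional K Γ]
    [AddCommGroup P] [Module K P] [Module Λ P] [IsScalarTower K Λ P] [Module.Finite Λ P]
    [Nontrivial P]
    [AddCommGroup Q] [Module K Q] [Module Γ Q] [IsScalarTower K Γ Q] [Module.Finite Γ Q]
    [Nontrivial Q]
    [AddCommGroup I] [Module K I] [Module Λ I] [IsScalarTower K Λ I] [Module.Finite Λ I]
    [Nontrivial I]
    [AddCommGroup J] [Module K J] [Module Γ J] [IsScalarTower K Γ J] [Module.Finite Γ J]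
    [Nontrivial J] :
    ((Module.Projective Λ P ∧ Module.Projective Γ Q) ↔
        Module.Projective (Λ ⊗[K] Γ) (P ⊗[K] Q)) ∧
      ((Module.Injective Λ I ∧ Module.Injective Γ J) ↔
        Module.Injective (Λ ⊗[K] Γ) (I ⊗[K] J)) := by
  refine ⟨?_, ?_⟩
  · rw [projective_iff_projChar (K := K), projective_iff_projChar (K := K),
      projective_iff_projChar (K := K)]
    exact ⟨fun h => projChar_tensor h.1 h.2, fun h => ⟨projChar_left h, projChar_right h⟩⟩
  · rw [injective_iff_injChar (K := K), injective_iff_injChar (K := K),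
      injective_iff_injChar (K := K)]
    exact ⟨fun h => injChar_tensor h.1 h.2, fun h => ⟨injChar_left h, injChar_right h⟩⟩
end
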